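/- arXiv:1109.4353 — 2 statements merged into one kernel-verified Lean document; each statement's English description precedes it below -/
import Mathlib

section
/- If R is an orthonormal conditional rewrite system, then →_{β∪R(β)} is shallow confluent, i.e. for all i,j ∈ ℕ the relations →_{β ∪ R(β)_i} and →_{β ∪ R(β)_j} commute. -/
/-!
The theorem follows from a one-step diamond property for a parallel reduction `Par i`, lying
between `→_{β ∪ R(β)_i}` and its reflexive-transitive closure (`Par.of_red`, `Par.reds`). It
contracts nested β-redexes and rule redexes simultaneously, in the manner of Tait and Martin-Löf;
a rule step takes `lσ` to `rτ` when the conditions hold for `σ` and `σ` reduces to `τ`.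

The diamond property for levels `i` and `j` (`diamond`) is proved by induction on the size of the
term, assuming commutation for every pair of levels smaller than `{i, j}` in the multiset order,
here measured by `2 ^ i + 2 ^ j`. Algebraic left-hand sides contain neither abstractions nor
applied variables, so they do not overlap with β-redexes. Hence a step from `lσ` (`root_diamond`)
either stays inside `σ`, because `l` is linear, or contracts a rule at a non-variable position of
`l` (`match_or_overlap`).

* If `σ` reduces to `τ'` at level `j`, the conditions of the rule still hold for `τ'`
  (`RootedBStep.of_par`): the right components `c` are normal forms at all levels, so commutation
  at levels `i - 1` and `j` shows that `dτ'` still reduces to `c`.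
* If another rule is contracted at a non-variable position of `l`, there is a critical pair, built
  from the most general unifier of two linear patterns (`exists_mgu`). Orthonormality gives an
  instance of some `d` reducing, at levels below `i` or `j`, to two distinct normal forms, which
  contradicts commutation at those levels (`no_overlap`).
* If the same rule is contracted at the root on both sides, the two substitutions agree on the
  variables of `l`, and their reducts are joined pointwise.
-/

set_option autoImplicit false

/-- λ-terms over a signature `Sig`, in de Bruijn representation
(terms are identified up to α-conversion). -/
inductive Tm (Sig : Type) : Type
  | var : ℕ → Tm Sig
  | app : Tm Sig → Tm Sig → Tm Sig
  | lam : Tm Sig → Tm Sig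
  | sym : Sig → Tm Sig

namespace Tm

variable {Sig : Type}

/-- Shift the free de Bruijn indices `≥ d` up by one. -/
def lift (d : ℕ) : Tm Sig → Tm Sig
  | var n => if n < d then var n else var (n + 1)
  | app t u => app (lift d t) (lift d u)
  | lam t => lam (lift (d + 1) t)
  | sym f => sym f

/-- Lift a parallel substitution under one binder. -/
def up (σ : ℕ → Tm Sig) : ℕ → Tm Sig
  | 0 => var 0
  | n + 1 => lift 0 (σ n)

/-- Capture-avoiding (parallel) substitution. -/
def subst (σ : ℕ → Tm Sig) : Tm Sig → Tm Sig
  | var n => σ n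
  | app t u => app (subst σ t) (subst σ u)
  | lam t => lam (subst (up σ) t)
  | sym f => sym f

def scons (u : Tm Sig) (σ : ℕ → Tm Sig) : ℕ → Tm Sig
  | 0 => u
  | n + 1 => σ n

/-- `subst1 u t` substitutes `u` for the de Bruijn variable `0` in `t`. -/
def subst1 (u t : Tm Sig) : Tm Sig := subst (scons u var) t

/-- `FVar t n` : de Bruijn index `n` occurs free in `t`. -/
def FVar : Tm Sig → ℕ → Prop
  | var m, n => m = n
  | app t u, n => FVar t n ∨ FVar u n
  | lam t, n => FVar t (n + 1)
  | sym _, _ => False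

/-- Closed terms. -/
def ClosedTm (t : Tm Sig) : Prop := ∀ n, ¬ FVar t n

def countVar : Tm Sig → ℕ → ℕ
  | var m, n => if m = n then 1 else 0
  | app t u, n => countVar t n + countVar u n
  | lam t, n => countVar t (n + 1)
  | sym _, _ => 0

/-- Linear terms: each variable occurs at most once. -/
def LinearTm (t : Tm Sig) : Prop := ∀ n, countVar t n ≤ 1

/-- `appList h [t1, …, tn] = h t1 … tn`. -/
def appList (h : Tm Sig) : List (Tm Sig) → Tm Sig
  | [] => h
  | u :: us => appList (app h u) us

/-- Applicative terms: terms containing no abstraction. -/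
inductive Applicative : Tm Sig → Prop
  | var (n : ℕ) : Applicative (var n)
  | sym (f : Sig) : Applicative (sym f)
  | app {t u : Tm Sig} : Applicative t → Applicative u → Applicative (app t u)

/-- Algebraic terms: `t ::= x | f t1 … tn`. -/
inductive Algebraic : Tm Sig → Prop
  | var (n : ℕ) : Algebraic (var n)
  | symApp (f : Sig) (ts : List (Tm Sig)) :
      (∀ t ∈ ts, Algebraic t) → Algebraic (appList (sym f) ts)

/-- `Subterm s t` : `s` is a subterm of `t`. -/
inductive Subterm : Tm Sig → Tm Sig → Prop
  | refl (t : Tm Sig) : Subterm t t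
  | appL {s t u : Tm Sig} : Subterm s t → Subterm s (app t u)
  | appR {s t u : Tm Sig} : Subterm s u → Subterm s (app t u)
  | lam {s t : Tm Sig} : Subterm s t → Subterm s (lam t)

/-- `lamN m t = λ…λ.t` with `m` abstractions. -/
def lamN : ℕ → Tm Sig → Tm Sig
  | 0, t => t
  | m + 1, t => lam (lamN m t)

end Tm

/-- β-reduction: the smallest rewrite relation (closed under abstraction, left and
right application and substitution) with `(λ.t) u →β t[0 := u]`. -/
inductive Beta {Sig : Type} : Tm Sig → Tm Sig → Prop
  | beta (t u : Tm Sig) : Beta (Tm.app (Tm.lam t) u) (Tm.subst1 u t)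
  | abs {t u : Tm Sig} : Beta t u → Beta (Tm.lam t) (Tm.lam u)
  | appL {t u v : Tm Sig} : Beta t u → Beta (Tm.app t v) (Tm.app u v)
  | appR {t u v : Tm Sig} : Beta t u → Beta (Tm.app v t) (Tm.app v u)
  | substC (σ : ℕ → Tm Sig) {t u : Tm Sig} : Beta t u → Beta (Tm.subst σ t) (Tm.subst σ u)

/-- Tait–Martin-Löf parallel β-reduction: the smallest parallel rewrite relation
with `(λ.t₁) t₂ ▷β u₁[0 := u₂]` whenever `t₁ ▷β u₁` and `t₂ ▷β u₂`. -/
inductive PBeta {Sig : Type} : Tm Sig → Tm Sig → Prop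
  | var (n : ℕ) : PBeta (Tm.var n) (Tm.var n)
  | sym (f : Sig) : PBeta (Tm.sym f) (Tm.sym f)
  | app {t₁ u₁ t₂ u₂ : Tm Sig} : PBeta t₁ u₁ → PBeta t₂ u₂ →
      PBeta (Tm.app t₁ t₂) (Tm.app u₁ u₂)
  | abs {t u : Tm Sig} : PBeta t u → PBeta (Tm.lam t) (Tm.lam u)
  | substC (σ : ℕ → Tm Sig) {t u : Tm Sig} : PBeta t u → PBeta (Tm.subst σ t) (Tm.subst σ u)
  | beta {t₁ u₁ t₂ u₂ : Tm Sig} : PBeta t₁ u₁ → PBeta t₂ u₂ →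
      PBeta (Tm.app (Tm.lam t₁) t₂) (Tm.subst1 u₂ u₁)

/-- β-normal forms. -/
def BetaNormal {Sig : Type} (t : Tm Sig) : Prop := ∀ u, ¬ Beta t u

/-- `IsBnf t n` : `n` is a β-normal form of `t`. -/
def IsBnf {Sig : Type} (t n : Tm Sig) : Prop :=
  Relation.ReflTransGen Beta t n ∧ BetaNormal n

/-- Weakly β-normalizing terms. -/
def WNbeta {Sig : Type} (t : Tm Sig) : Prop := ∃ n, IsBnf t n

/-- Conditional rewrite rule `d1 = c1 ∧ … ∧ dn = cn ⊃ l ↦ r`:  every variable of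
the `di`, `ci` and `r` occurs in `l`, and `l` is a non-variable algebraic term. -/
structure CondRule (Sig : Type) where
  conds : List (Tm Sig × Tm Sig)
  lhs : Tm Sig
  rhs : Tm Sig
  lhs_alg : Tm.Algebraic lhs
  lhs_not_var : ∀ n, lhs ≠ Tm.var n
  fv_conds : ∀ p ∈ conds,
    (∀ n, Tm.FVar p.1 n → Tm.FVar lhs n) ∧ (∀ n, Tm.FVar p.2 n → Tm.FVar lhs n)
  fv_rhs : ∀ n, Tm.FVar rhs n → Tm.FVar lhs n

/-- Joinability: a common reduct. -/
def Joinable {α : Type} (R : α → α → Prop) (t u : α) : Prop :=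
  ∃ v, Relation.ReflTransGen R t v ∧ Relation.ReflTransGen R u v

/-- One stratum of conditional rewriting: the smallest rewrite relation such that
`lσ → rσ` for every rule whose conditions are joinable w.r.t. `prev`. -/
inductive CondStep {Sig : Type} (Rules : Set (CondRule Sig))
    (prev : Tm Sig → Tm Sig → Prop) : Tm Sig → Tm Sig → Prop
  | rule {ρ : CondRule Sig} (hρ : ρ ∈ Rules) (σ : ℕ → Tm Sig)
      (hconds : ∀ p ∈ ρ.conds, Joinable prev (Tm.subst σ p.1) (Tm.subst σ p.2)) :
      CondStep Rules prev (Tm.subst σ ρ.lhs) (Tm.subst σ ρ.rhs)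
  | abs {t u : Tm Sig} : CondStep Rules prev t u →
      CondStep Rules prev (Tm.lam t) (Tm.lam u)
  | appL {t u v : Tm Sig} : CondStep Rules prev t u →
      CondStep Rules prev (Tm.app t v) (Tm.app u v)
  | appR {t u v : Tm Sig} : CondStep Rules prev t u →
      CondStep Rules prev (Tm.app v t) (Tm.app v u)
  | substC (σ : ℕ → Tm Sig) {t u : Tm Sig} : CondStep Rules prev t u →
      CondStep Rules prev (Tm.subst σ t) (Tm.subst σ u)

/-- Stratified conditional rewriting `→_{R_i}`. -/
def CondRel {Sig : Type} (Rules : Set (CondRule Sig)) : ℕ → Tm Sig → Tm Sig → Prop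
  | 0 => fun _ _ => False
  | i + 1 => CondStep Rules (CondRel Rules i)

/-- Conditional rewriting `→_R = ⋃ i, →_{R_i}`. -/
def CondRew {Sig : Type} (Rules : Set (CondRule Sig)) (t u : Tm Sig) : Prop :=
  ∃ i, CondRel Rules i t u

/-- Stratified β-conditional rewriting `→_{R(β)_i}`: conditions are evaluated
w.r.t. `→_{β ∪ R(β)_{i-1}}`. -/
def BCondRel {Sig : Type} (Rules : Set (CondRule Sig)) : ℕ → Tm Sig → Tm Sig → Prop
  | 0 => fun _ _ => False
  | i + 1 => CondStep Rules (fun a b => Beta a b ∨ BCondRel Rules i a b)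

/-- β-conditional rewriting `→_{R(β)} = ⋃ i, →_{R(β)_i}`. -/
def BCondRew {Sig : Type} (Rules : Set (CondRule Sig)) (t u : Tm Sig) : Prop :=
  ∃ i, BCondRel Rules i t u

def IsConfluent {α : Type} (R : α → α → Prop) : Prop :=
  ∀ t u v, Relation.ReflTransGen R t u → Relation.ReflTransGen R t v →
    ∃ w, Relation.ReflTransGen R u w ∧ Relation.ReflTransGen R v w

def ConfluentOn {α : Type} (S : Set α) (R : α → α → Prop) : Prop :=
  ∀ t ∈ S, ∀ u v, Relation.ReflTransGen R t u → Relation.ReflTransGen R t v →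
    ∃ w, Relation.ReflTransGen R u w ∧ Relation.ReflTransGen R v w

def Commutes {α : Type} (R₁ R₂ : α → α → Prop) : Prop :=
  ∀ s u t, Relation.ReflTransGen R₁ s u → Relation.ReflTransGen R₂ s t →
    ∃ v, Relation.ReflTransGen R₂ u v ∧ Relation.ReflTransGen R₁ t v

def LeftLinear {Sig : Type} (Rules : Set (CondRule Sig)) : Prop :=
  ∀ ρ ∈ Rules, Tm.LinearTm ρ.lhs

/-- Semi-closed systems: in every rule the `ci` are closed applicative terms. -/
def SemiClosed {Sig : Type} (Rules : Set (CondRule Sig)) : Prop :=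
  ∀ ρ ∈ Rules, ∀ p ∈ ρ.conds, Tm.Applicative p.2 ∧ Tm.ClosedTm p.2

def RightApplicative {Sig : Type} (Rules : Set (CondRule Sig)) : Prop :=
  ∀ ρ ∈ Rules, Tm.Applicative ρ.rhs

def RightAlgebraic {Sig : Type} (Rules : Set (CondRule Sig)) : Prop :=
  ∀ ρ ∈ Rules, Tm.Algebraic ρ.rhs

/-- Algebraic systems: in every rule the `di`, `ci` and `r` are algebraic. -/
def AlgebraicSys {Sig : Type} (Rules : Set (CondRule Sig)) : Prop :=
  ∀ ρ ∈ Rules, (∀ p ∈ ρ.conds, Tm.Algebraic p.1 ∧ Tm.Algebraic p.2) ∧ Tm.Algebraic ρ.rhs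

/-- A term respects the arity `a` if it contains no subterm `f t1 … tn` with `n > a f`. -/
def RespectsArity {Sig : Type} (a : Sig → ℕ) (t : Tm Sig) : Prop :=
  ∀ (f : Sig) (ts : List (Tm Sig)),
    Tm.Subterm (Tm.appList (Tm.sym f) ts) t → ts.length ≤ a f

/-- A conditional rule respects `a` if the `di`, `ci` and both sides of `l ↦ r`
respect `a`, and `l = f l1 … lk` with `k = a f`. -/
def RuleRespectsArity {Sig : Type} (a : Sig → ℕ) (ρ : CondRule Sig) : Prop :=
  (∀ p ∈ ρ.conds, RespectsArity a p.1 ∧ RespectsArity a p.2) ∧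
  RespectsArity a ρ.lhs ∧ RespectsArity a ρ.rhs ∧
  ∃ (f : Sig) (ls : List (Tm Sig)), ρ.lhs = Tm.appList (Tm.sym f) ls ∧ ls.length = a f

def SysRespectsArity {Sig : Type} (a : Sig → ℕ) (Rules : Set (CondRule Sig)) : Prop :=
  ∀ ρ ∈ Rules, RuleRespectsArity a ρ

/-- `AN_a` : terms having a β-normal form, whose β-normal form respects `a`. -/
def ANset {Sig : Type} (a : Sig → ℕ) : Set (Tm Sig) :=
  {t | ∃ n, IsBnf t n ∧ RespectsArity a n}

/-- The rewrite relation of the unconditional system `R̄` containing `l ↦ di` and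
`l ↦ r` for each rule `d⃗ = c⃗ ⊃ l ↦ r` of `R`. -/
inductive BarRel {Sig : Type} (Rules : Set (CondRule Sig)) : Tm Sig → Tm Sig → Prop
  | ruleCond {ρ : CondRule Sig} (hρ : ρ ∈ Rules) {p : Tm Sig × Tm Sig} (hp : p ∈ ρ.conds)
      (σ : ℕ → Tm Sig) : BarRel Rules (Tm.subst σ ρ.lhs) (Tm.subst σ p.1)
  | ruleRhs {ρ : CondRule Sig} (hρ : ρ ∈ Rules) (σ : ℕ → Tm Sig) :
      BarRel Rules (Tm.subst σ ρ.lhs) (Tm.subst σ ρ.rhs)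
  | abs {t u : Tm Sig} : BarRel Rules t u → BarRel Rules (Tm.lam t) (Tm.lam u)
  | appL {t u v : Tm Sig} : BarRel Rules t u → BarRel Rules (Tm.app t v) (Tm.app u v)
  | appR {t u v : Tm Sig} : BarRel Rules t u → BarRel Rules (Tm.app v t) (Tm.app v u)
  | substC (σ : ℕ → Tm Sig) {t u : Tm Sig} : BarRel Rules t u →
      BarRel Rules (Tm.subst σ t) (Tm.subst σ u)

/-- Conditionally `(R, a)`-stable sets of terms. -/
def CondStable {Sig : Type} (Rules : Set (CondRule Sig)) (a : Sig → ℕ)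
    (S : Set (Tm Sig)) : Prop :=
  (∀ t ∈ S, RespectsArity a t) ∧
  (∀ t ∈ S, ∀ u, (Beta t u ∨ BarRel Rules t u) → u ∈ S) ∧
  (∀ t ∈ S, ∀ u, Tm.Subterm u t → u ∈ S)

/-- Head β-step along an application spine. -/
inductive HeadAux {Sig : Type} : Tm Sig → Tm Sig → Prop
  | beta (b a₀ : Tm Sig) : HeadAux (Tm.app (Tm.lam b) a₀) (Tm.subst1 a₀ b)
  | app {t u : Tm Sig} (v : Tm Sig) : HeadAux t u → HeadAux (Tm.app t v) (Tm.app u v)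

/-- Head β-reduction `→h` : `λx⃗.(λy.b) a₀ a₁ … aₙ →h λx⃗.b[y:=a₀] a₁ … aₙ`. -/
inductive HeadRed {Sig : Type} : Tm Sig → Tm Sig → Prop
  | base {t u : Tm Sig} : HeadAux t u → HeadRed t u
  | lam {t u : Tm Sig} : HeadRed t u → HeadRed (Tm.lam t) (Tm.lam u)

/-- The relation `≻` : (a) `λx⃗.v a1 … an ≻ ai` for `v` a variable or a symbol and
`n > 0`; (b) `λx⃗.(λy.b) a0 a1 … an ≻ λx⃗.b[y:=a0] a1 … an` (a head β-step). -/
def SuccRel {Sig : Type} (t u : Tm Sig) : Prop :=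
  (∃ (m : ℕ) (h : Tm Sig) (args : List (Tm Sig)),
    ((∃ n, h = Tm.var n) ∨ (∃ f, h = Tm.sym f)) ∧ args ≠ [] ∧
    t = Tm.lamN m (Tm.appList h args) ∧ u ∈ args)
  ∨ HeadRed t u

/-- The nested parallelization `▷_{R_i}` of `→_{R_i}`: the smallest parallel rewrite
relation with `lσ ▷ rτ` whenever `lσ →_{R_i} rσ` and `σ ▷ τ`. -/
inductive NPar {Sig : Type} (Rules : Set (CondRule Sig)) (i : ℕ) : Tm Sig → Tm Sig → Prop
  | var (n : ℕ) : NPar Rules i (Tm.var n) (Tm.var n)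
  | sym (f : Sig) : NPar Rules i (Tm.sym f) (Tm.sym f)
  | app {t₁ u₁ t₂ u₂ : Tm Sig} : NPar Rules i t₁ u₁ → NPar Rules i t₂ u₂ →
      NPar Rules i (Tm.app t₁ t₂) (Tm.app u₁ u₂)
  | abs {t u : Tm Sig} : NPar Rules i t u → NPar Rules i (Tm.lam t) (Tm.lam u)
  | substC (σ : ℕ → Tm Sig) {t u : Tm Sig} : NPar Rules i t u →
      NPar Rules i (Tm.subst σ t) (Tm.subst σ u)
  | rule {ρ : CondRule Sig} (hρ : ρ ∈ Rules) (σ τ : ℕ → Tm Sig)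
      (hstep : CondRel Rules i (Tm.subst σ ρ.lhs) (Tm.subst σ ρ.rhs))
      (hστ : ∀ n, NPar Rules i (σ n) (τ n)) :
      NPar Rules i (Tm.subst σ ρ.lhs) (Tm.subst τ ρ.rhs)

/-- The smallest parallel rewrite relation containing `R`. -/
inductive ParCl {Sig : Type} (R : Tm Sig → Tm Sig → Prop) : Tm Sig → Tm Sig → Prop
  | base {t u : Tm Sig} : R t u → ParCl R t u
  | var (n : ℕ) : ParCl R (Tm.var n) (Tm.var n)
  | sym (f : Sig) : ParCl R (Tm.sym f) (Tm.sym f)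
  | app {t₁ u₁ t₂ u₂ : Tm Sig} : ParCl R t₁ u₁ → ParCl R t₂ u₂ →
      ParCl R (Tm.app t₁ t₂) (Tm.app u₁ u₂)
  | abs {t u : Tm Sig} : ParCl R t u → ParCl R (Tm.lam t) (Tm.lam u)
  | substC (σ : ℕ → Tm Sig) {t u : Tm Sig} : ParCl R t u →
      ParCl R (Tm.subst σ t) (Tm.subst σ u)

/-- A rooted β-conditional rewrite step `lσ →_{R(β)_i} rσ` for the rule `ρ` and the
substitution `σ`: `ρ ∈ R` and the conditions of `ρ` instantiated by `σ` are joinable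
w.r.t. `→_{β ∪ R(β)_{i-1}}`. -/
def RootedBStep {Sig : Type} (Rules : Set (CondRule Sig)) :
    ℕ → CondRule Sig → (ℕ → Tm Sig) → Prop
  | 0 => fun _ _ => False
  | i + 1 => fun ρ σ => ρ ∈ Rules ∧
      ∀ p ∈ ρ.conds,
        Joinable (fun a b => Beta a b ∨ BCondRel Rules i a b)
          (Tm.subst σ p.1) (Tm.subst σ p.2)

/-- Subterm at a position (positions only descend through applications, which is
enough for algebraic left-hand sides). -/
def subtermAt {Sig : Type} : Tm Sig → List Bool → Option (Tm Sig)
  | t, [] => some t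
  | Tm.app a _, false :: p => subtermAt a p
  | Tm.app _ b, true :: p => subtermAt b p
  | _, _ :: _ => none

/-- Replacement at a position. -/
def replaceAt {Sig : Type} : Tm Sig → List Bool → Tm Sig → Option (Tm Sig)
  | _, [], s => some s
  | Tm.app a b, false :: p, s => (replaceAt a p s).map (fun a' => Tm.app a' b)
  | Tm.app a b, true :: p, s => (replaceAt b p s).map (fun b' => Tm.app a b')
  | _, _ :: _, _ => none

/-- Conditional critical pairs: an overlap of `ρ₂` at a non-variable position `p` of
the left-hand side of `ρ₁` via a most general unifier (here presented with a pair of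
substitutions, which accounts for variable-disjoint renamings). -/
def CriticalPair {Sig : Type} (Rules : Set (CondRule Sig))
    (conds : List (Tm Sig × Tm Sig)) (s t : Tm Sig) : Prop :=
  ∃ ρ₁ ∈ Rules, ∃ ρ₂ ∈ Rules, ∃ (p : List Bool) (w : Tm Sig) (σ₁ σ₂ : ℕ → Tm Sig),
    subtermAt ρ₁.lhs p = some w ∧
    (∀ n, w ≠ Tm.var n) ∧
    ¬ (ρ₁ = ρ₂ ∧ p = []) ∧
    Tm.subst σ₁ w = Tm.subst σ₂ ρ₂.lhs ∧
    (∀ τ₁ τ₂ : ℕ → Tm Sig, Tm.subst τ₁ w = Tm.subst τ₂ ρ₂.lhs →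
      ∃ δ : ℕ → Tm Sig, (∀ n, Tm.FVar ρ₁.lhs n → τ₁ n = Tm.subst δ (σ₁ n)) ∧
        (∀ n, Tm.FVar ρ₂.lhs n → τ₂ n = Tm.subst δ (σ₂ n))) ∧
    conds = ρ₁.conds.map (fun q => (Tm.subst σ₁ q.1, Tm.subst σ₁ q.2)) ++
            ρ₂.conds.map (fun q => (Tm.subst σ₂ q.1, Tm.subst σ₂ q.2)) ∧
    replaceAt (Tm.subst σ₁ ρ₁.lhs) p (Tm.subst σ₂ ρ₂.rhs) = some s ∧
    t = Tm.subst σ₁ ρ₁.rhs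

/-- A symbol is defined if it heads the left-hand side of some rule. -/
def DefinedSym {Sig : Type} (Rules : Set (CondRule Sig)) (f : Sig) : Prop :=
  ∃ ρ ∈ Rules, ∃ ts : List (Tm Sig), ρ.lhs = Tm.appList (Tm.sym f) ts

/-- OrthonormalSys systems. -/
def OrthonormalSys {Sig : Type} (Rules : Set (CondRule Sig)) : Prop :=
  LeftLinear Rules ∧
  (∀ ρ ∈ Rules, ∀ p ∈ ρ.conds, Tm.ClosedTm p.2 ∧ BetaNormal p.2 ∧
    ∀ f, DefinedSym Rules f → ¬ Tm.Subterm (Tm.sym f) p.2) ∧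
  (∀ (conds : List (Tm Sig × Tm Sig)) (s t : Tm Sig), CriticalPair Rules conds s t →
    ∃ i j : Fin conds.length, i ≠ j ∧
      (conds.get i).1 = (conds.get j).1 ∧ (conds.get i).2 ≠ (conds.get j).2)

/-- Dershowitz–Manna multiset extension of `<` on `ℕ`. -/
def MulLt (s t : Multiset ℕ) : Prop :=
  ∃ X Y Z : Multiset ℕ, Y ≠ 0 ∧ s = Z + X ∧ t = Z + Y ∧ ∀ x ∈ X, ∃ y ∈ Y, x < y

/-! ### Substitution calculus -/

namespace Orthonormal

open Relation Tm

variable {Sig : Type}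

/-- Renaming of free de Bruijn indices. -/
def ren (ξ : ℕ → ℕ) : Tm Sig → Tm Sig
  | var n => var (ξ n)
  | app t u => app (ren ξ t) (ren ξ u)
  | lam t => lam (ren (fun n => Nat.casesOn n 0 (fun k => ξ k + 1)) t)
  | sym f => sym f

theorem lift_eq_ren (d : ℕ) (t : Tm Sig) :
    lift d t = ren (fun n => if n < d then n else n + 1) t := by
  induction t generalizing d with
  | var n => simp only [lift, ren]; split_ifs <;> rfl
  | app t u iht ihu => simp [lift, ren, iht, ihu]
  | sym f => rfl
  | lam t ih =>
    simp only [lift, ren, ih]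
    congr 2
    funext n
    cases n with
    | zero => simp
    | succ n => simp; split_ifs <;> rfl

theorem lift_zero (t : Tm Sig) : lift 0 t = ren Nat.succ t := by
  rw [lift_eq_ren]; simp

theorem subst_ren (σ : ℕ → Tm Sig) (ξ : ℕ → ℕ) (t : Tm Sig) :
    subst σ (ren ξ t) = subst (fun n => σ (ξ n)) t := by
  induction t generalizing σ ξ with
  | var n => rfl
  | app t u iht ihu => simp [subst, ren, iht, ihu]
  | sym f => rfl
  | lam t ih =>
    simp only [subst, ren, ih]
    congr 2
    funext n
    cases n <;> rfl

theorem ren_ren (ζ ξ : ℕ → ℕ) (t : Tm Sig) :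
    ren ζ (ren ξ t) = ren (fun n => ζ (ξ n)) t := by
  induction t generalizing ζ ξ with
  | var n => rfl
  | app t u iht ihu => simp [ren, iht, ihu]
  | sym f => rfl
  | lam t ih =>
    simp only [ren, ih]
    congr 2
    funext n
    cases n <;> rfl

theorem ren_subst (ξ : ℕ → ℕ) (σ : ℕ → Tm Sig) (t : Tm Sig) :
    ren ξ (subst σ t) = subst (fun n => ren ξ (σ n)) t := by
  induction t generalizing σ ξ with
  | var n => rfl
  | app t u iht ihu => simp [subst, ren, iht, ihu]
  | sym f => rfl
  | lam t ih =>
    simp only [subst, ren, ih]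
    congr 2
    funext n
    cases n with
    | zero => rfl
    | succ n => simp only [up, lift_zero, ren_ren]

theorem subst_subst (τ σ : ℕ → Tm Sig) (t : Tm Sig) :
    subst τ (subst σ t) = subst (fun n => subst τ (σ n)) t := by
  induction t generalizing σ τ with
  | var n => rfl
  | app t u iht ihu => simp [subst, iht, ihu]
  | sym f => rfl
  | lam t ih =>
    simp only [subst, ih]
    congr 2
    funext n
    cases n with
    | zero => rfl
    | succ n => simp only [up, lift_zero, subst_ren, ren_subst]

theorem up_var : up (var : ℕ → Tm Sig) = var := by
  funext n; cases n <;> simp [up, lift]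

theorem subst_var (t : Tm Sig) : subst var t = t := by
  induction t with
  | var n => rfl
  | app t u iht ihu => simp [subst, iht, ihu]
  | sym f => rfl
  | lam t ih => simp [subst, up_var, ih]

theorem ren_eq_subst (ξ : ℕ → ℕ) (t : Tm Sig) : ren ξ t = subst (fun n => var (ξ n)) t := by
  rw [← subst_ren, subst_var]

theorem lift_zero_subst (t : Tm Sig) : lift 0 t = subst (fun n => var (n + 1)) t := by
  rw [lift_zero, ren_eq_subst]

theorem subst_congr {σ τ : ℕ → Tm Sig} {t : Tm Sig} (h : ∀ n, FVar t n → σ n = τ n) :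
    subst σ t = subst τ t := by
  induction t generalizing σ τ with
  | var n => exact h n rfl
  | app t u iht ihu =>
    simp only [subst]
    rw [iht fun n hn => h n (Or.inl hn), ihu fun n hn => h n (Or.inr hn)]
  | sym f => rfl
  | lam t ih =>
    simp only [subst]
    rw [ih]
    intro n hn
    cases n with
    | zero => rfl
    | succ n => simp only [up]; rw [h n hn]

theorem subst_closed {t : Tm Sig} (h : ClosedTm t) (σ : ℕ → Tm Sig) : subst σ t = t := by
  rw [subst_congr (τ := var) fun n hn => absurd hn (h n), subst_var]

theorem subst_subst1 (σ : ℕ → Tm Sig) (u t : Tm Sig) :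
    subst σ (subst1 u t) = subst1 (subst σ u) (subst (up σ) t) := by
  simp only [subst1, subst_subst]
  congr 1
  funext n
  cases n with
  | zero => rfl
  | succ n => simp only [scons, up, lift_zero, subst_ren, subst, subst_var]

/-! ### Patterns and unification -/

/-- Non-variable terms. -/
def NotVar (t : Tm Sig) : Prop := ∀ n, t ≠ var n

/-- Terms without abstraction in which no variable is applied; this recursive description
covers all algebraic terms and is inherited by every subterm. -/
def Pat : Tm Sig → Prop
  | var _ => True
  | sym _ => True
  | app t u => NotVar t ∧ Pat t ∧ Pat u
  | lam _ => False

theorem Pat.appList {h : Tm Sig} {ts : List (Tm Sig)} (hh : Pat h) (hv : NotVar h)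
    (hts : ∀ t ∈ ts, Pat t) : Pat (appList h ts) := by
  induction ts generalizing h with
  | nil => exact hh
  | cons u us ih =>
    exact ih ⟨hv, hh, hts u (by simp)⟩ (fun n => nofun) fun t ht => hts t (by simp [ht])

theorem Pat.of_algebraic {t : Tm Sig} (h : Algebraic t) : Pat t := by
  induction h with
  | var n => trivial
  | symApp f ts _ ih => exact Pat.appList (h := sym f) trivial (fun n => nofun) ih

theorem Pat.subst_ne_lam {t b : Tm Sig} (h : Pat t) (hv : NotVar t) (σ : ℕ → Tm Sig) :
    subst σ t ≠ lam b := by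
  cases t with
  | var n => exact absurd rfl (hv n)
  | app t u => exact nofun
  | sym f => exact nofun
  | lam t => exact h.elim

theorem Pat.subst_ne_var {t : Tm Sig} (hv : NotVar t) (σ : ℕ → Tm Sig) : NotVar (subst σ t) := by
  cases t with
  | var n => exact absurd rfl (hv n)
  | app t u => exact fun n => nofun
  | sym f => exact fun n => nofun
  | lam t => exact fun n => nofun

theorem FVar.countVar_pos {t : Tm Sig} {n : ℕ} (h : FVar t n) : 0 < countVar t n := by
  induction t generalizing n with
  | var m => simp only [FVar] at h; simp [countVar, h]
  | app t u iht ihu =>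
    simp only [countVar]
    rcases h with h | h
    · have := iht h; omega
    · have := ihu h; omega
  | sym f => exact h.elim
  | lam t ih => exact ih (n := n + 1) h

theorem _root_.Tm.LinearTm.left {t u : Tm Sig} (h : LinearTm (app t u)) : LinearTm t := fun n => by
  have := h n; simp only [countVar] at this; omega

theorem _root_.Tm.LinearTm.right {t u : Tm Sig} (h : LinearTm (app t u)) : LinearTm u := fun n => by
  have := h n; simp only [countVar] at this; omega

theorem _root_.Tm.LinearTm.disjoint {t u : Tm Sig} (h : LinearTm (app t u)) {n : ℕ}
    (ht : FVar t n) : ¬ FVar u n := fun hu => by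
  have := h n; simp only [countVar] at this
  have := FVar.countVar_pos ht
  have := FVar.countVar_pos hu
  omega

open Classical in
/-- The substitution acting as `σ` on the free variables of `t` and as `τ` elsewhere. -/
noncomputable def merge (t : Tm Sig) (σ τ : ℕ → Tm Sig) : ℕ → Tm Sig :=
  fun n => if FVar t n then σ n else τ n

theorem merge_pos {t : Tm Sig} {n : ℕ} (h : FVar t n) (σ τ : ℕ → Tm Sig) :
    merge t σ τ n = σ n := if_pos h

theorem merge_neg {t : Tm Sig} {n : ℕ} (h : ¬ FVar t n) (σ τ : ℕ → Tm Sig) :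
    merge t σ τ n = τ n := if_neg h

theorem subst_merge (t : Tm Sig) (σ τ : ℕ → Tm Sig) :
    subst (merge t σ τ) t = subst σ t := subst_congr fun _ hn => merge_pos hn _ _

theorem subst_merge_right {t u : Tm Sig} (h : LinearTm (app t u)) (σ τ : ℕ → Tm Sig) :
    subst (merge t σ τ) u = subst τ u :=
  subst_congr fun _ hn => merge_neg (fun ht => h.disjoint ht hn) _ _

theorem subst_inj {t : Tm Sig} (ht : Pat t) {σ τ : ℕ → Tm Sig} (h : subst σ t = subst τ t) :
    ∀ n, FVar t n → σ n = τ n := by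
  induction t with
  | var m => rintro n rfl; exact h
  | app t u iht ihu =>
    simp only [subst, app.injEq] at h
    rintro n (hn | hn)
    · exact iht ht.2.1 h.1 n hn
    · exact ihu ht.2.2 h.2 n hn
  | sym f => exact fun n hn => hn.elim
  | lam t => exact ht.elim

/-- The combination of two substitutions acting on even, respectively odd, indices. Unifiers
rename the variables of the left term to even and those of the right term to odd indices. -/
def interleave (τ₁ τ₂ : ℕ → Tm Sig) : ℕ → Tm Sig :=
  fun n => if n % 2 = 0 then τ₁ (n / 2) else τ₂ (n / 2)

theorem interleave_even (τ₁ τ₂ : ℕ → Tm Sig) (n : ℕ) : interleave τ₁ τ₂ (2 * n) = τ₁ n := by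
  simp [interleave]

theorem interleave_odd (τ₁ τ₂ : ℕ → Tm Sig) (n : ℕ) :
    interleave τ₁ τ₂ (2 * n + 1) = τ₂ n := by
  have h1 : (2 * n + 1) % 2 = 1 := by omega
  have h2 : (2 * n + 1) / 2 = n := by omega
  simp [interleave, h1, h2]

/-- Most general unifiers of linear patterns exist. Since the factoring substitution is always
`interleave τ₁ τ₂`, unifiers of corresponding subterms can be merged without composing them. -/
theorem exists_mgu {s t : Tm Sig} (hs : Pat s) (ht : Pat t) (ls : LinearTm s) (lt : LinearTm t)
    {θ₁ θ₂ : ℕ → Tm Sig} (hu : subst θ₁ s = subst θ₂ t) :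
    ∃ σ₁ σ₂ : ℕ → Tm Sig, subst σ₁ s = subst σ₂ t ∧
      ∀ τ₁ τ₂ : ℕ → Tm Sig, subst τ₁ s = subst τ₂ t →
        (∀ n, FVar s n → τ₁ n = subst (interleave τ₁ τ₂) (σ₁ n)) ∧
        (∀ n, FVar t n → τ₂ n = subst (interleave τ₁ τ₂) (σ₂ n)) := by
  induction s generalizing t with
  | lam s => exact hs.elim
  | var m =>
    refine ⟨fun _ => subst (fun k => var (2 * k + 1)) t, fun k => var (2 * k + 1), rfl, ?_⟩
    intro τ₁ τ₂ h
    refine ⟨?_, fun n _ => by simp [subst, interleave_odd]⟩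
    rintro n rfl
    simpa [subst_subst, subst, interleave_odd] using h
  | sym f =>
    cases t with
    | lam t => exact ht.elim
    | app t u => simp [subst] at hu
    | sym g => exact ⟨var, var, by simpa [subst] using hu, fun _ _ _ => ⟨nofun, nofun⟩⟩
    | var m =>
      refine ⟨var, fun _ => sym f, rfl, fun τ₁ τ₂ h => ⟨nofun, ?_⟩⟩
      rintro n rfl
      exact h.symm
  | app a b iha ihb =>
    cases t with
    | lam t => exact ht.elim
    | sym g => simp [subst] at hu
    | var m =>
      refine ⟨fun k => var (2 * k), fun _ => subst (fun k => var (2 * k)) (app a b), rfl, ?_⟩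
      intro τ₁ τ₂ h
      refine ⟨fun n _ => by simp [subst, interleave_even], ?_⟩
      rintro n rfl
      rw [subst_subst]
      simp only [subst, interleave_even] at h ⊢
      exact h.symm
    | app c d =>
      simp only [subst, app.injEq] at hu
      obtain ⟨α₁, α₂, hα, mα⟩ := iha hs.2.1 ht.2.1 ls.left lt.left hu.1
      obtain ⟨β₁, β₂, hβ, mβ⟩ := ihb hs.2.2 ht.2.2 ls.right lt.right hu.2
      refine ⟨merge a α₁ β₁, merge c α₂ β₂, ?_, ?_⟩
      · simp only [subst, subst_merge, subst_merge_right ls, subst_merge_right lt, hα, hβ]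
      · intro τ₁ τ₂ h
        simp only [subst, app.injEq] at h
        obtain ⟨p, q⟩ := mα τ₁ τ₂ h.1
        obtain ⟨p', q'⟩ := mβ τ₁ τ₂ h.2
        constructor
        · rintro n (hn | hn)
          · rw [merge_pos hn]; exact p n hn
          · rw [merge_neg fun ha => ls.disjoint ha hn]; exact p' n hn
        · rintro n (hn | hn)
          · rw [merge_pos hn]; exact q n hn
          · rw [merge_neg fun ha => lt.disjoint ha hn]; exact q' n hn

theorem subtermAt_pat {t w : Tm Sig} {p : List Bool} (h : subtermAt t p = some w)
    (ht : Pat t) (lt : LinearTm t) : Pat w ∧ LinearTm w := by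
  induction t generalizing p with
  | lam t => exact ht.elim
  | var n =>
    cases p with
    | nil => cases h; exact ⟨ht, lt⟩
    | cons b p => cases b <;> cases h
  | sym n =>
    cases p with
    | nil => cases h; exact ⟨ht, lt⟩
    | cons b p => cases b <;> cases h
  | app t u iht ihu =>
    rcases p with _ | ⟨_ | _, p⟩
    · cases h; exact ⟨ht, lt⟩
    · exact iht h ht.2.1 lt.left
    · exact ihu h ht.2.2 lt.right

theorem exists_replaceAt {t w : Tm Sig} {p : List Bool} (h : subtermAt t p = some w)
    (σ : ℕ → Tm Sig) (s : Tm Sig) : ∃ r, replaceAt (subst σ t) p s = some r := by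
  induction t generalizing p with
  | app t u iht ihu =>
    rcases p with _ | ⟨_ | _, p⟩
    · exact ⟨s, by simp [replaceAt]⟩
    · obtain ⟨r, hr⟩ := iht h
      exact ⟨_, by simp [subst, replaceAt, hr]; rfl⟩
    · obtain ⟨r, hr⟩ := ihu h
      exact ⟨_, by simp [subst, replaceAt, hr]; rfl⟩
  | _ =>
    rcases p with _ | ⟨_ | _, p⟩
    · exact ⟨s, by simp [replaceAt]⟩
    · cases h
    · cases h

/-- The number of nodes of a term. -/
def tsize : Tm Sig → ℕ
  | var _ => 1
  | sym _ => 1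
  | app t u => tsize t + tsize u + 1
  | lam t => tsize t + 1

theorem tsize_pos (t : Tm Sig) : 0 < tsize t := by cases t <;> simp [tsize]

theorem tsize_le_subst {l : Tm Sig} (hl : Pat l) (σ : ℕ → Tm Sig) {n : ℕ} (hn : FVar l n) :
    tsize (σ n) ≤ tsize (subst σ l) := by
  induction l with
  | var m => cases hn; exact le_rfl
  | sym f => exact hn.elim
  | lam t => exact hl.elim
  | app t u iht ihu =>
    simp only [subst, tsize]
    rcases hn with hn | hn
    · have := iht hl.2.1 hn; omega
    · have := ihu hl.2.2 hn; omega

theorem tsize_lt_subst {l : Tm Sig} (hl : Pat l) (hv : NotVar l) (σ : ℕ → Tm Sig) {n : ℕ}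
    (hn : FVar l n) : tsize (σ n) < tsize (subst σ l) := by
  cases l with
  | var m => exact absurd rfl (hv m)
  | sym f => exact hn.elim
  | lam t => exact hl.elim
  | app t u =>
    simp only [subst, tsize]
    rcases hn with hn | hn
    · have := tsize_le_subst hl.2.1 σ hn; omega
    · have := tsize_le_subst hl.2.2 σ hn; omega

/-! ### Stratified reduction -/

variable (Rules : Set (CondRule Sig))

/-- The relation `→_{β ∪ R(β)_i}`. -/
def Red (i : ℕ) : Tm Sig → Tm Sig → Prop := fun a b => Beta a b ∨ BCondRel Rules i a b

/-- The reflexive-transitive closure of `→_{β ∪ R(β)_i}`. -/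
abbrev Reds (i : ℕ) : Tm Sig → Tm Sig → Prop := ReflTransGen (Red Rules i)

variable {Rules} {i j : ℕ}

theorem Red.subst {t u : Tm Sig} (h : Red Rules i t u) (σ : ℕ → Tm Sig) :
    Red Rules i (subst σ t) (subst σ u) := by
  rcases h with h | h
  · exact Or.inl (h.substC σ)
  · cases i with
    | zero => exact h.elim
    | succ i => exact Or.inr (CondStep.substC σ h)

theorem Red.abs {t u : Tm Sig} (h : Red Rules i t u) : Red Rules i (lam t) (lam u) := by
  rcases h with h | h
  · exact Or.inl h.abs
  · cases i with
    | zero => exact h.elim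
    | succ i => exact Or.inr (CondStep.abs h)

theorem Red.appL {t u v : Tm Sig} (h : Red Rules i t u) : Red Rules i (app t v) (app u v) := by
  rcases h with h | h
  · exact Or.inl h.appL
  · cases i with
    | zero => exact h.elim
    | succ i => exact Or.inr (CondStep.appL h)

theorem Red.appR {t u v : Tm Sig} (h : Red Rules i t u) : Red Rules i (app v t) (app v u) := by
  rcases h with h | h
  · exact Or.inl h.appR
  · cases i with
    | zero => exact h.elim
    | succ i => exact Or.inr (CondStep.appR h)

theorem Reds.subst {t u : Tm Sig} (h : Reds Rules i t u) (σ : ℕ → Tm Sig) :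
    Reds Rules i (subst σ t) (subst σ u) :=
  ReflTransGen.lift _ (fun _ _ h => Red.subst h σ) _ _ h

theorem Reds.abs {t u : Tm Sig} (h : Reds Rules i t u) : Reds Rules i (lam t) (lam u) :=
  ReflTransGen.lift lam (fun _ _ h => Red.abs h) _ _ h

theorem Reds.app {t u t' u' : Tm Sig} (h : Reds Rules i t t') (h' : Reds Rules i u u') :
    Reds Rules i (app t u) (app t' u') :=
  (ReflTransGen.lift (fun x => Tm.app x u) (fun _ _ h => Red.appL h) _ _ h).trans
    (ReflTransGen.lift (fun x => Tm.app t' x) (fun _ _ h => Red.appR h) _ _ h')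

theorem Reds.up {σ τ : ℕ → Tm Sig} (h : ∀ n, Reds Rules i (σ n) (τ n)) :
    ∀ n, Reds Rules i (up σ n) (up τ n)
  | 0 => .refl
  | n + 1 => by
    simp only [Tm.up, lift_zero_subst]
    exact (h n).subst _

theorem Reds.subst_right (t : Tm Sig) {σ τ : ℕ → Tm Sig} (h : ∀ n, Reds Rules i (σ n) (τ n)) :
    Reds Rules i (Tm.subst σ t) (Tm.subst τ t) := by
  induction t generalizing σ τ with
  | var n => exact h n
  | sym f => exact .refl
  | app t u iht ihu => exact (iht h).app (ihu h)
  | lam t ih => exact (ih (Reds.up h)).abs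

/-! ### Parallel reduction -/

variable (Rules) in
/-- Parallel reduction at level `i`: any set of nested β-redexes and rule redexes of a term is
contracted at once. The conditions of a rule are checked on the substitution before reduction. -/
inductive Par (i : ℕ) : Tm Sig → Tm Sig → Prop
  | var (n : ℕ) : Par i (var n) (var n)
  | sym (f : Sig) : Par i (sym f) (sym f)
  | app {t t' u u' : Tm Sig} : Par i t t' → Par i u u' → Par i (app t u) (app t' u')
  | abs {t t' : Tm Sig} : Par i t t' → Par i (lam t) (lam t')
  | beta {t t' u u' : Tm Sig} : Par i t t' → Par i u u' →
      Par i (Tm.app (lam t) u) (subst1 u' t')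
  | rule {ρ : CondRule Sig} {σ τ : ℕ → Tm Sig} (h : RootedBStep Rules i ρ σ)
      (hστ : ∀ n, Par i (σ n) (τ n)) : Par i (subst σ ρ.lhs) (subst τ ρ.rhs)

theorem Par.refl (t : Tm Sig) : Par Rules i t t := by
  induction t with
  | var n => exact .var n
  | sym f => exact .sym f
  | app t u iht ihu => exact iht.app ihu
  | lam t ih => exact ih.abs

theorem RootedBStep.mem {ρ : CondRule Sig} {σ : ℕ → Tm Sig} (h : RootedBStep Rules i ρ σ) :
    ρ ∈ Rules := by
  cases i with
  | zero => exact h.elim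
  | succ i => exact h.1

theorem RootedBStep.red {ρ : CondRule Sig} {σ : ℕ → Tm Sig} (h : RootedBStep Rules i ρ σ) :
    Red Rules i (subst σ ρ.lhs) (subst σ ρ.rhs) := by
  cases i with
  | zero => exact h.elim
  | succ i => exact Or.inr (CondStep.rule h.1 σ h.2)

theorem RootedBStep.subst {ρ : CondRule Sig} {σ : ℕ → Tm Sig} (h : RootedBStep Rules i ρ σ)
    (δ : ℕ → Tm Sig) : RootedBStep Rules i ρ (fun n => subst δ (σ n)) := by
  cases i with
  | zero => exact h.elim
  | succ i =>
    refine ⟨h.1, fun p hp => ?_⟩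
    obtain ⟨v, h1, h2⟩ := h.2 p hp
    simp only [← subst_subst]
    exact ⟨_, Reds.subst (i := i) h1 δ, Reds.subst (i := i) h2 δ⟩

theorem Par.subst_left {t u : Tm Sig} (h : Par Rules i t u) (δ : ℕ → Tm Sig) :
    Par Rules i (subst δ t) (subst δ u) := by
  induction h generalizing δ with
  | var n => exact .refl _
  | sym f => exact .refl _
  | app _ _ iht ihu => exact (iht δ).app (ihu δ)
  | abs _ ih => exact (ih _).abs
  | beta _ _ iht ihu =>
    rw [subst_subst1]
    exact (iht (up δ)).beta (ihu δ)
  | rule h _ ih =>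
    rw [subst_subst, subst_subst]
    exact .rule (RootedBStep.subst h δ) fun n => ih n δ

theorem Par.up {σ τ : ℕ → Tm Sig} (h : ∀ n, Par Rules i (σ n) (τ n)) :
    ∀ n, Par Rules i (up σ n) (up τ n)
  | 0 => .var 0
  | n + 1 => by
    simp only [Tm.up, lift_zero_subst]
    exact (h n).subst_left _

theorem Par.subst {t u : Tm Sig} (h : Par Rules i t u) {σ τ : ℕ → Tm Sig}
    (hσ : ∀ n, Par Rules i (σ n) (τ n)) : Par Rules i (Tm.subst σ t) (Tm.subst τ u) := by
  induction h generalizing σ τ with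
  | var n => exact hσ n
  | sym f => exact .refl _
  | app _ _ iht ihu => exact (iht hσ).app (ihu hσ)
  | abs _ ih => exact (ih (Par.up hσ)).abs
  | beta _ _ iht ihu =>
    rw [subst_subst1]
    exact (iht (Par.up hσ)).beta (ihu hσ)
  | rule h _ ih =>
    rw [subst_subst, subst_subst]
    exact .rule (RootedBStep.subst h σ) fun n => ih n hσ

theorem Par.subst1 {t t' u u' : Tm Sig} (h : Par Rules i t t') (h' : Par Rules i u u') :
    Par Rules i (subst1 u t) (subst1 u' t') :=
  h.subst fun n => by
    cases n with
    | zero => exact h'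
    | succ n => exact .var n

theorem Par.reds {t u : Tm Sig} (h : Par Rules i t u) : Reds Rules i t u := by
  induction h with
  | var n => exact .refl
  | sym f => exact .refl
  | app _ _ iht ihu => exact iht.app ihu
  | abs _ ih => exact ih.abs
  | beta _ _ iht ihu => exact (iht.abs.app ihu).tail (Or.inl (Beta.beta _ _))
  | rule h _ ih => exact (Reds.subst_right _ ih).head (RootedBStep.red h)

theorem Par.of_beta {t u : Tm Sig} (h : Beta t u) : Par Rules i t u := by
  induction h with
  | beta t u => exact (Par.refl t).beta (Par.refl u)
  | abs _ ih => exact ih.abs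
  | appL _ ih => exact ih.app (.refl _)
  | appR _ ih => exact (Par.refl _).app ih
  | substC σ _ ih => exact ih.subst_left σ

theorem Par.of_red {t u : Tm Sig} (h : Red Rules i t u) : Par Rules i t u := by
  rcases h with h | h
  · exact .of_beta h
  cases i with
  | zero => exact h.elim
  | succ i =>
    change CondStep _ _ _ _ at h
    induction h with
    | rule hρ σ hc => exact .rule ⟨hρ, hc⟩ fun n => .refl _
    | abs _ ih => exact ih.abs
    | appL _ ih => exact ih.app (.refl _)
    | appR _ ih => exact (Par.refl _).app ih
    | substC σ _ ih => exact ih.subst_left σ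

/-- A root rule contraction from `t` to `v` in parallel with reductions in the substitution. -/
def RootStep (Rules : Set (CondRule Sig)) (i : ℕ) (t v : Tm Sig) : Prop :=
  ∃ (ρ : CondRule Sig) (σ τ : ℕ → Tm Sig), RootedBStep Rules i ρ σ ∧
    (∀ n, Par Rules i (σ n) (τ n)) ∧ t = subst σ ρ.lhs ∧ v = subst τ ρ.rhs

theorem lhs_pat (ρ : CondRule Sig) : Pat ρ.lhs := .of_algebraic ρ.lhs_alg

theorem Par.inv_var {n : ℕ} {v : Tm Sig} (h : Par Rules i (Tm.var n) v) : v = Tm.var n := by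
  generalize ht : Tm.var n = t at h
  cases h with
  | var m => rfl
  | rule h _ => exact absurd ht.symm (Pat.subst_ne_var (CondRule.lhs_not_var _) _ n)
  | _ => cases ht

theorem Par.inv_sym {f : Sig} {v : Tm Sig} (h : Par Rules i (Tm.sym f) v) :
    v = Tm.sym f ∨ RootStep Rules i (Tm.sym f) v := by
  generalize ht : Tm.sym f = t at h
  cases h with
  | sym m => exact Or.inl rfl
  | rule h h' => exact Or.inr ⟨_, _, _, h, h', rfl, rfl⟩
  | _ => cases ht

theorem Par.inv_lam {b v : Tm Sig} (h : Par Rules i (Tm.lam b) v) :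
    ∃ b', v = Tm.lam b' ∧ Par Rules i b b' := by
  generalize ht : Tm.lam b = t at h
  cases h with
  | abs h => cases ht; exact ⟨_, rfl, h⟩
  | rule h _ => exact absurd ht.symm ((lhs_pat _).subst_ne_lam (CondRule.lhs_not_var _) _)
  | _ => cases ht

theorem Par.inv_app {a b v : Tm Sig} (h : Par Rules i (Tm.app a b) v) :
    (∃ a' b', v = Tm.app a' b' ∧ Par Rules i a a' ∧ Par Rules i b b') ∨
    (∃ c c' b', a = Tm.lam c ∧ v = Tm.subst1 b' c' ∧ Par Rules i c c' ∧ Par Rules i b b') ∨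
    RootStep Rules i (Tm.app a b) v := by
  generalize ht : Tm.app a b = t at h
  cases h with
  | app h h' => cases ht; exact Or.inl ⟨_, _, rfl, h, h'⟩
  | beta h h' => cases ht; exact Or.inr (Or.inl ⟨_, _, _, rfl, rfl, h, h'⟩)
  | rule h h' => exact Or.inr (Or.inr ⟨_, _, _, h, h', rfl, rfl⟩)
  | _ => cases ht

/-- A parallel reduct of an instance of a linear pattern `s` either arises from reducing the
substitution, or some rule is contracted at a non-variable position of `s`. -/
theorem match_or_overlap {s v : Tm Sig} (hs : Pat s) (ls : LinearTm s) {σ : ℕ → Tm Sig}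
    (h : Par Rules j (subst σ s) v) :
    (∃ τ, v = subst τ s ∧ ∀ n, Par Rules j (σ n) (τ n)) ∨
    (∃ (p : List Bool) (w : Tm Sig) (ρ : CondRule Sig) (σ₂ τ₂ : ℕ → Tm Sig),
      subtermAt s p = some w ∧ NotVar w ∧ subst σ w = subst σ₂ ρ.lhs ∧
      RootedBStep Rules j ρ σ₂ ∧ (∀ n, Par Rules j (σ₂ n) (τ₂ n)) ∧
      (p = [] → v = subst τ₂ ρ.rhs)) := by
  induction s generalizing v with
  | lam s => exact hs.elim
  | var m =>
    refine Or.inl ⟨merge (var m) (fun _ => v) σ, (merge_pos (t := var m) (n := m) rfl (fun _ => v) σ).symm, ?_⟩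
    intro n
    by_cases hn : FVar (var m : Tm Sig) n
    · rw [merge_pos hn]; cases hn; exact h
    · rw [merge_neg hn]; exact .refl _
  | sym f =>
    rcases h.inv_sym with h | ⟨ρ, σ₂, τ₂, h1, h2, h3, h4⟩
    · exact Or.inl ⟨σ, h, fun n => .refl _⟩
    · exact Or.inr ⟨[], sym f, ρ, σ₂, τ₂, rfl, fun n => nofun, h3, h1, h2, fun _ => h4⟩
  | app a b iha ihb =>
    rcases Par.inv_app h with ⟨a', b', rfl, ha, hb⟩ | ⟨c, c', b', hc, -⟩ |
      ⟨ρ, σ₂, τ₂, h1, h2, h3, h4⟩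
    · rcases iha hs.2.1 ls.left ha with ⟨τa, rfl, hτa⟩ | ⟨p, w, ρ, σ₂, τ₂, h1, h2, h3, h4, h5, -⟩
      · rcases ihb hs.2.2 ls.right hb with
          ⟨τb, rfl, hτb⟩ | ⟨p, w, ρ, σ₂, τ₂, h1, h2, h3, h4, h5, -⟩
        · refine Or.inl ⟨merge a τa τb, ?_, fun n => ?_⟩
          · simp only [subst, subst_merge, subst_merge_right ls]
          · by_cases hn : FVar a n
            · rw [merge_pos hn]; exact hτa n
            · rw [merge_neg hn]; exact hτb n
        · exact Or.inr ⟨true :: p, w, ρ, σ₂, τ₂, h1, h2, h3, h4, h5, nofun⟩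
      · exact Or.inr ⟨false :: p, w, ρ, σ₂, τ₂, h1, h2, h3, h4, h5, nofun⟩
    · exact absurd hc (hs.2.1.subst_ne_lam hs.1 σ)
    · exact Or.inr ⟨[], app a b, ρ, σ₂, τ₂, rfl, fun n => nofun, h3, h1, h2, fun _ => h4⟩

/-! ### Conditions of orthonormal systems -/

theorem subterm_appList {s h : Tm Sig} (hs : Subterm s h) (ts : List (Tm Sig)) :
    Subterm s (appList h ts) := by
  induction ts generalizing h with
  | nil => exact hs
  | cons u us ih => exact ih hs.appL

theorem subst_appList (σ : ℕ → Tm Sig) (h : Tm Sig) (ts : List (Tm Sig)) :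
    subst σ (appList h ts) = appList (subst σ h) (ts.map (subst σ)) := by
  induction ts generalizing h with
  | nil => rfl
  | cons u us ih => exact ih (app h u)

theorem exists_head (ρ : CondRule Sig) : ∃ f ts, ρ.lhs = appList (sym f) ts := by
  have hv := ρ.lhs_not_var
  have ha := ρ.lhs_alg
  generalize ρ.lhs = l at *
  cases ha with
  | var n => exact absurd rfl (hv n)
  | symApp f ts _ => exact ⟨f, ts, rfl⟩

/-- β-normal terms without defined symbols are irreducible at every level. -/
theorem Par.eq_of_normal {c v : Tm Sig} (h : Par Rules i c v) (hn : BetaNormal c)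
    (hd : ∀ f, DefinedSym Rules f → ¬ Subterm (Tm.sym f) c) : v = c := by
  induction h with
  | var n => rfl
  | sym f => rfl
  | app _ _ iht ihu =>
    rw [iht (fun u hu => hn _ hu.appL) fun f hf hs => hd f hf hs.appL,
      ihu (fun u hu => hn _ hu.appR) fun f hf hs => hd f hf hs.appR]
  | abs _ ih => rw [ih (fun u hu => hn _ hu.abs) fun f hf hs => hd f hf hs.lam]
  | beta _ _ => exact absurd (Beta.beta _ _) (hn _)
  | @rule ρ σ τ h _ _ =>
    obtain ⟨f, ts, hl⟩ := exists_head ρ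
    refine absurd ?_ (hd f ⟨ρ, RootedBStep.mem h, ts, hl⟩)
    rw [hl, subst_appList]
    exact subterm_appList (.refl _) _

/-- `NF Rules c`: the term `c` is irreducible at every level. -/
def NF (Rules : Set (CondRule Sig)) (c : Tm Sig) : Prop := ∀ i v, Reds Rules i c v → v = c

theorem nf_cond (ho : OrthonormalSys Rules) {ρ : CondRule Sig} (hρ : ρ ∈ Rules)
    {p : Tm Sig × Tm Sig} (hp : p ∈ ρ.conds) : NF Rules p.2 := by
  intro i v h
  induction h with
  | refl => rfl
  | tail _ h ih =>
    subst ih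
    obtain ⟨-, h1, h2⟩ := ho.2.1 ρ hρ p hp
    exact (Par.of_red h).eq_of_normal h1 h2

theorem rooted_succ_iff (ho : OrthonormalSys Rules) {ρ : CondRule Sig} {σ : ℕ → Tm Sig} :
    RootedBStep Rules (i + 1) ρ σ ↔
      ρ ∈ Rules ∧ ∀ p ∈ ρ.conds, Reds Rules i (subst σ p.1) p.2 := by
  refine and_congr_right fun hρ => forall₂_congr fun p hp => ?_
  rw [subst_closed (ho.2.1 ρ hρ p hp).1]
  constructor
  · rintro ⟨v, h1, h2⟩
    rw [← nf_cond ho hρ hp i v h2]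
    exact h1
  · exact fun h => ⟨p.2, h, .refl⟩

/-- Commutation of all pairs of levels below `{i, j}` in the multiset order, which is embedded
in the natural numbers by the measure `2 ^ i + 2 ^ j`. -/
def CommBelow (Rules : Set (CondRule Sig)) (i j : ℕ) : Prop :=
  ∀ i' j', 2 ^ i' + 2 ^ j' < 2 ^ i + 2 ^ j → Commutes (Red Rules i') (Red Rules j')

theorem CommBelow.symm (h : CommBelow Rules i j) : CommBelow Rules j i :=
  fun i' j' hlt => h i' j' (by omega)

/-- The conditions of a rule are preserved when its substitution is reduced. -/
theorem RootedBStep.of_par (ho : OrthonormalSys Rules) (hc : CommBelow Rules i j)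
    {ρ : CondRule Sig} {σ τ : ℕ → Tm Sig} (h : RootedBStep Rules i ρ σ)
    (hστ : ∀ n, Par Rules j (σ n) (τ n)) : RootedBStep Rules i ρ τ := by
  cases i with
  | zero => exact h.elim
  | succ i =>
    rw [rooted_succ_iff ho] at h ⊢
    refine ⟨h.1, fun p hp => ?_⟩
    have hlt : 2 ^ i + 2 ^ j < 2 ^ (i + 1) + 2 ^ j := by
      have := Nat.two_pow_pos i
      rw [pow_succ]; omega
    obtain ⟨v, h1, h2⟩ := hc i j hlt _ _ _ (h.2 p hp)
      (Reds.subst_right p.1 fun n => (hστ n).reds)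
    rwa [nf_cond ho h.1 hp j v h1] at h2

/-- Two rules whose conditions are both satisfied never overlap: the critical pair would contain
two conditions with the same left component, which would have two distinct normal forms. -/
theorem no_overlap (ho : OrthonormalSys Rules) (hc : CommBelow Rules i j)
    {ρ₁ ρ₂ : CondRule Sig} {τ₁ τ₂ : ℕ → Tm Sig} (h₁ : RootedBStep Rules i ρ₁ τ₁)
    (h₂ : RootedBStep Rules j ρ₂ τ₂) {p : List Bool} {w : Tm Sig}
    (hp : subtermAt ρ₁.lhs p = some w) (hw : NotVar w) (hne : ¬ (ρ₁ = ρ₂ ∧ p = []))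
    (hu : subst τ₁ w = subst τ₂ ρ₂.lhs) : False := by
  have m₁ := RootedBStep.mem h₁
  have m₂ := RootedBStep.mem h₂
  obtain ⟨pw, lw⟩ := subtermAt_pat hp (lhs_pat ρ₁) (ho.1 ρ₁ m₁)
  obtain ⟨σ₁, σ₂, hσ, hm⟩ := exists_mgu pw (lhs_pat ρ₂) lw (ho.1 ρ₂ m₂) hu
  -- Variables of `ρ₁.lhs` outside `w` are not constrained and only get renamed.
  set σ₁' := merge w σ₁ (fun n => var (2 * n)) with hσ₁'
  have hm' : ∀ θ₁ θ₂ : ℕ → Tm Sig, subst θ₁ w = subst θ₂ ρ₂.lhs →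
      (∀ n, FVar ρ₁.lhs n → θ₁ n = subst (interleave θ₁ θ₂) (σ₁' n)) ∧
        (∀ n, FVar ρ₂.lhs n → θ₂ n = subst (interleave θ₁ θ₂) (σ₂ n)) := by
    intro θ₁ θ₂ hθ
    obtain ⟨q₁, q₂⟩ := hm θ₁ θ₂ hθ
    refine ⟨fun n _ => ?_, q₂⟩
    by_cases hn : FVar w n
    · rw [hσ₁', merge_pos hn]; exact q₁ n hn
    · rw [hσ₁', merge_neg hn]; simp [subst, interleave_even]
  obtain ⟨s, hs⟩ := exists_replaceAt hp σ₁' (subst σ₂ ρ₂.rhs)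
  obtain ⟨a, b, hab, hd, hcne⟩ := ho.2.2 _ s _ ⟨ρ₁, m₁, ρ₂, m₂, p, w, σ₁', σ₂, hp, hw, hne,
    (subst_merge w _ _).trans hσ, fun θ₁ θ₂ hθ => ⟨_, hm' θ₁ θ₂ hθ⟩, rfl, hs, rfl⟩
  obtain ⟨q₁, q₂⟩ := hm' τ₁ τ₂ hu
  set δ := interleave τ₁ τ₂
  have key : ∀ {k : ℕ} {ρ : CondRule Sig} {τ σ : ℕ → Tm Sig}, RootedBStep Rules k ρ τ →
      (∀ n, FVar ρ.lhs n → τ n = subst δ (σ n)) → ∀ q ∈ ρ.conds,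
      ∃ m, m + 1 = k ∧ Reds Rules m (subst δ (subst σ q.1)) (subst σ q.2) ∧
        NF Rules (subst σ q.2) := by
    intro k ρ τ σ h hτ q hq
    cases k with
    | zero => exact h.elim
    | succ m =>
      obtain ⟨hρ, h⟩ := (rooted_succ_iff ho).1 h
      have e : subst δ (subst σ q.1) = subst τ q.1 := by
        rw [subst_subst]
        exact (subst_congr fun n hn => hτ n ((ρ.fv_conds q hq).1 n hn)).symm
      rw [e, subst_closed (ho.2.1 ρ hρ q hq).1]
      exact ⟨m, rfl, h q hq, nf_cond ho hρ hq⟩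
  have hall : ∀ c ∈ ρ₁.conds.map (fun q => (subst σ₁' q.1, subst σ₁' q.2)) ++
      ρ₂.conds.map (fun q => (subst σ₂ q.1, subst σ₂ q.2)),
      ∃ m, (m + 1 = i ∨ m + 1 = j) ∧ Reds Rules m (subst δ c.1) c.2 ∧ NF Rules c.2 := by
    intro c hmem
    rcases List.mem_append.1 hmem with hmem | hmem
    · obtain ⟨q, hq, rfl⟩ := List.mem_map.1 hmem
      obtain ⟨m, hk, h⟩ := key h₁ q₁ q hq
      exact ⟨m, Or.inl hk, h⟩
    · obtain ⟨q, hq, rfl⟩ := List.mem_map.1 hmem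
      obtain ⟨m, hk, h⟩ := key h₂ q₂ q hq
      exact ⟨m, Or.inr hk, h⟩
  obtain ⟨k, hk, ra, na⟩ := hall _ (List.get_mem _ a)
  obtain ⟨l, hl, rb, nb⟩ := hall _ (List.get_mem _ b)
  rw [hd] at ra
  have hlt : 2 ^ k + 2 ^ l < 2 ^ i + 2 ^ j := by
    have := Nat.two_pow_pos k
    have := Nat.two_pow_pos l
    have := Nat.two_pow_pos i
    have := Nat.two_pow_pos j
    rcases hk with rfl | rfl <;> rcases hl with h | h
    · obtain rfl : l = k := by omega
      rw [pow_succ] at *; omega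
    · subst h; rw [pow_succ, pow_succ]; omega
    · subst h; rw [pow_succ, pow_succ]; omega
    · obtain rfl : l = k := by omega
      rw [pow_succ] at *; omega
  obtain ⟨v, hva, hvb⟩ := hc k l hlt _ _ _ ra rb
  exact hcne ((na _ _ hva).symm.trans (nb _ _ hvb))

/-! ### The diamond property -/

/-- Parallel reductions at levels `i` and `j` from `t` can be joined in one step each. -/
def Diamond (Rules : Set (CondRule Sig)) (i j : ℕ) (t : Tm Sig) : Prop :=
  ∀ u v, Par Rules i t u → Par Rules j t v → ∃ w, Par Rules j u w ∧ Par Rules i v w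

theorem Diamond.symm {t : Tm Sig} (h : Diamond Rules i j t) : Diamond Rules j i t :=
  fun u v hu hv => let ⟨w, h1, h2⟩ := h v u hv hu; ⟨w, h2, h1⟩

/-- Substitutions are joined pointwise on a set of variables; elsewhere nothing is claimed. -/
theorem join_subst {l : Tm Sig} {σ τ τ' : ℕ → Tm Sig}
    (hd : ∀ n, FVar l n → Diamond Rules i j (σ n))
    (h : ∀ n, Par Rules i (σ n) (τ n)) (h' : ∀ n, FVar l n → Par Rules j (σ n) (τ' n)) :
    ∃ ν : ℕ → Tm Sig, ∀ n, FVar l n → Par Rules j (τ n) (ν n) ∧ Par Rules i (τ' n) (ν n) := by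
  have : ∀ n, ∃ w, FVar l n → Par Rules j (τ n) w ∧ Par Rules i (τ' n) w := by
    intro n
    by_cases hn : FVar l n
    · obtain ⟨w, hw⟩ := hd n hn _ _ (h n) (h' n hn)
      exact ⟨w, fun _ => hw⟩
    · exact ⟨τ n, fun hn' => absurd hn' hn⟩
  choose ν hν using this
  exact ⟨ν, hν⟩

theorem par_subst_of_fvar {r : Tm Sig} {σ τ : ℕ → Tm Sig}
    (h : ∀ n, FVar r n → Par Rules i (σ n) (τ n)) :
    Par Rules i (subst σ r) (subst τ r) := by
  rw [← subst_merge r τ σ]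
  refine (Par.refl r).subst fun n => ?_
  by_cases hn : FVar r n
  · rw [merge_pos hn]; exact h n hn
  · rw [merge_neg hn]; exact .refl _

/-- Joining a root rule contraction with an arbitrary parallel step. -/
theorem root_diamond (ho : OrthonormalSys Rules) (hc : CommBelow Rules i j) {t u v : Tm Sig}
    (ih : ∀ s, tsize s < tsize t → Diamond Rules i j s) (hu : RootStep Rules i t u)
    (hv : Par Rules j t v) : ∃ w, Par Rules j u w ∧ Par Rules i v w := by
  obtain ⟨ρ, σ, τ, hr, hστ, rfl, rfl⟩ := hu
  have hρ := RootedBStep.mem hr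
  have hd : ∀ n, FVar ρ.lhs n → Diamond Rules i j (σ n) := fun n hn =>
    ih _ (tsize_lt_subst (lhs_pat ρ) ρ.lhs_not_var σ hn)
  rcases match_or_overlap (lhs_pat ρ) (ho.1 ρ hρ) hv with
    ⟨τ', rfl, hτ'⟩ | ⟨p, w, ρ₂, σ₂, τ₂, hp, hw, he, hr₂, hτ₂, hroot⟩
  · obtain ⟨ν, hν⟩ := join_subst hd hστ fun n _ => hτ' n
    refine ⟨subst ν ρ.rhs, par_subst_of_fvar fun n hn => (hν n (ρ.fv_rhs n hn)).1, ?_⟩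
    have e : subst ν ρ.rhs = subst (merge ρ.lhs ν τ') ρ.rhs :=
      subst_congr fun n hn => (merge_pos (ρ.fv_rhs n hn) _ _).symm
    rw [e]
    refine .rule (RootedBStep.of_par ho hc hr hτ') fun n => ?_
    by_cases hn : FVar ρ.lhs n
    · rw [merge_pos hn]; exact (hν n hn).2
    · rw [merge_neg hn]; exact .refl _
  · by_cases hsame : ρ = ρ₂ ∧ p = []
    · obtain ⟨rfl, rfl⟩ := hsame
      have hwl : w = ρ.lhs := by
        simpa [subtermAt] using hp.symm
      subst hwl
      have hσ := subst_inj (lhs_pat ρ) he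
      obtain ⟨ν, hν⟩ := join_subst (τ' := τ₂) hd hστ fun n hn => by rw [hσ n hn]; exact hτ₂ n
      rw [hroot rfl]
      exact ⟨subst ν ρ.rhs, par_subst_of_fvar fun n hn => (hν n (ρ.fv_rhs n hn)).1,
        par_subst_of_fvar fun n hn => (hν n (ρ.fv_rhs n hn)).2⟩
    · exact (no_overlap ho hc hr hr₂ hp hw hsame he).elim

theorem diamond (ho : OrthonormalSys Rules) (hc : CommBelow Rules i j) (t : Tm Sig) :
    Diamond Rules i j t := by
  induction hk : tsize t using Nat.strong_induction_on generalizing t with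
  | _ k ih =>
  subst hk
  replace ih : ∀ s, tsize s < tsize t → Diamond Rules i j s := fun s hs => ih _ hs s rfl
  intro u v hu hv
  have left : RootStep Rules i t u → ∃ w, Par Rules j u w ∧ Par Rules i v w :=
    fun h => root_diamond ho hc ih h hv
  have right : RootStep Rules j t v → ∃ w, Par Rules j u w ∧ Par Rules i v w := fun h =>
    let ⟨w, h1, h2⟩ := root_diamond ho hc.symm (fun s hs => (ih s hs).symm) h hu
    ⟨w, h2, h1⟩
  cases t with
  | var n => rw [hu.inv_var, hv.inv_var]; exact ⟨_, .refl _, .refl _⟩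
  | sym f =>
    rcases hu.inv_sym with rfl | h
    · exact ⟨v, hv, .refl _⟩
    · exact left h
  | lam b =>
    obtain ⟨b₁, rfl, h₁⟩ := hu.inv_lam
    obtain ⟨b₂, rfl, h₂⟩ := hv.inv_lam
    obtain ⟨w, hw₁, hw₂⟩ := ih b (by simp [tsize]) _ _ h₁ h₂
    exact ⟨_, hw₁.abs, hw₂.abs⟩
  | app a b =>
    have iha := ih a (by simp only [tsize]; omega)
    have ihb := ih b (by simp only [tsize]; omega)
    have ihc : ∀ c, a = lam c → Diamond Rules i j c := by
      rintro c rfl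
      exact ih c (by simp only [tsize]; omega)
    rcases hu.inv_app with ⟨a₁, b₁, rfl, ha₁, hb₁⟩ | ⟨c, c₁, b₁, rfl, rfl, hc₁, hb₁⟩ | h
    · rcases hv.inv_app with ⟨a₂, b₂, rfl, ha₂, hb₂⟩ | ⟨c, c₂, b₂, rfl, rfl, hc₂, hb₂⟩ | h
      · obtain ⟨x, hx₁, hx₂⟩ := iha _ _ ha₁ ha₂
        obtain ⟨y, hy₁, hy₂⟩ := ihb _ _ hb₁ hb₂
        exact ⟨_, hx₁.app hy₁, hx₂.app hy₂⟩
      · obtain ⟨c₁, rfl, hc₁⟩ := ha₁.inv_lam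
        obtain ⟨x, hx₁, hx₂⟩ := ihc c rfl _ _ hc₁ hc₂
        obtain ⟨y, hy₁, hy₂⟩ := ihb _ _ hb₁ hb₂
        exact ⟨_, hx₁.beta hy₁, hx₂.subst1 hy₂⟩
      · exact right h
    · rcases hv.inv_app with ⟨a₂, b₂, rfl, ha₂, hb₂⟩ | ⟨c', c₂, b₂, e, rfl, hc₂, hb₂⟩ | h
      · obtain ⟨c₂, rfl, hc₂⟩ := ha₂.inv_lam
        obtain ⟨x, hx₁, hx₂⟩ := ihc c rfl _ _ hc₁ hc₂
        obtain ⟨y, hy₁, hy₂⟩ := ihb _ _ hb₁ hb₂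
        exact ⟨_, hx₁.subst1 hy₁, hx₂.beta hy₂⟩
      · cases e
        obtain ⟨x, hx₁, hx₂⟩ := ihc c rfl _ _ hc₁ hc₂
        obtain ⟨y, hy₁, hy₂⟩ := ihb _ _ hb₁ hb₂
        exact ⟨_, hx₁.subst1 hy₁, hx₂.subst1 hy₂⟩
      · exact right h
    · exact left h

theorem commutes_of_diamond (hd : ∀ t, Diamond Rules i j t) :
    Commutes (Red Rules i) (Red Rules j) := by
  have strip : ∀ {s u t : Tm Sig}, Par Rules i s u → Reds Rules j s t →
      ∃ v, Reds Rules j u v ∧ Par Rules i t v := by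
    intro s u t hu ht
    induction ht with
    | refl => exact ⟨u, .refl, hu⟩
    | tail _ h ih =>
      obtain ⟨v, h1, h2⟩ := ih
      obtain ⟨w, h3, h4⟩ := hd _ _ _ h2 (.of_red h)
      exact ⟨w, h1.trans h3.reds, h4⟩
  intro s u t hu ht
  induction hu with
  | refl => exact ⟨t, ht, .refl⟩
  | tail _ h ih =>
    obtain ⟨v, h1, h2⟩ := ih
    obtain ⟨w, h3, h4⟩ := strip (.of_red h) h1
    exact ⟨w, h3, h2.trans h4.reds⟩

theorem commutes_red (ho : OrthonormalSys Rules) (i j : ℕ) :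
    Commutes (Red Rules i) (Red Rules j) := by
  induction hk : 2 ^ i + 2 ^ j using Nat.strong_induction_on generalizing i j with
  | _ k ih =>
  subst hk
  exact commutes_of_diamond fun t => diamond ho (fun i' j' h => ih _ h i' j' rfl) t

end Orthonormal

/-- If `R` is orthonormal then `→_{β∪R(β)}` is shallow confluent:
for all `i j`, `→_{β ∪ R(β)_i}` and `→_{β ∪ R(β)_j}` commute. -/
theorem shallow_confluence_orthonormal {Sig : Type} (Rules : Set (CondRule Sig))
    (horth : OrthonormalSys Rules) (i j : ℕ) :
    Commutes (fun a b : Tm Sig => Beta a b ∨ BCondRel Rules i a b)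
             (fun a b : Tm Sig => Beta a b ∨ BCondRel Rules j a b) := by
  exact Orthonormal.commutes_red horth i j
end

section
/- Let R be a conditional rewrite system that is semi-closed, left-linear and right-applicative. Then for every i ∈ ℕ, the parallel β-reduction ▷β commutes with →_{R_i}: whenever u ◁β* t →*_{R_i} v there exists w with u →*_{R_i} w ◁β* v. -/
/-!
The proof is by induction on the level `i`. It suffices to close the diagram for one parallel β-step
`t ▷ u` against one rewrite step `t → v`, producing `u →* w` and `v ▷ w` (`CS.pb_diagram`); tiling
then gives the commutation of the reflexive-transitive closures (`commutes_of_diagram`).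

The interesting case is a root step `lσ → rσ`. A left-linear algebraic `l` headed by a symbol does
not overlap with any β-redex, so `lσ ▷ u` forces `u = lτ` with `σ ▷ τ` (`PB.of_linear_pat`), and
`rσ ▷ rτ`. It remains to see that the conditions `d = c` still hold for `τ` (`conds_of_pb`). Let `s`
be a common reduct of `dσ` and `cσ = c`. Since `c` is applicative and right-hand sides are
applicative, `s` is applicative, hence a β-normal form. Commutation at level `i - 1`, applied to
`dσ ▷ dτ` and `dσ →* s`, yields `w` with `dτ →* w` and `s ▷* w`; then
`w = s`, so `dτ →* s` and `c →* s`.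

Both `PBeta` and `CondStep` include closure under substitution as a generating clause. They are
replaced by the relations `PB` and `CS`, which omit that clause and therefore can be inverted; the
clause is recovered as a lemma.
-/

set_option autoImplicit false

/-! ### Substitution calculus -/

namespace Tm

variable {Sig : Type}

theorem lift_lift (t : Tm Sig) : ∀ d e : ℕ, e ≤ d →
    lift (d + 1) (lift e t) = lift e (lift d t) := by
  induction t with
  | var n =>
    intro d e h
    by_cases h1 : n < e
    · have h2 : n < d := by omega
      have h3 : n < d + 1 := by omega
      simp [lift, h1, h2, h3]
    · by_cases h2 : n < d
      · simp [lift, h1, h2]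
      · have h3 : ¬ n + 1 < e := by omega
        simp [lift, h1, h2, h3]
  | app t u iht ihu => intro d e h; simp [lift, iht d e h, ihu d e h]
  | lam t ih => intro d e h; simp [lift, ih (d + 1) (e + 1) (by omega)]
  | sym f => intro d e h; rfl

theorem lift_eq_subst (t : Tm Sig) : ∀ d : ℕ,
    lift d t = subst (fun n => if n < d then var n else var (n + 1)) t := by
  induction t with
  | var n => intro d; rfl
  | app t u iht ihu => intro d; simp [lift, subst, iht d, ihu d]
  | lam t ih =>
    intro d
    simp only [lift, subst, ih (d + 1)]
    congr 2
    funext n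
    cases n with
    | zero => simp [up]
    | succ n => by_cases h : n < d <;> simp [up, h, lift]
  | sym f => intro d; rfl

theorem subst_lift (t : Tm Sig) : ∀ (d : ℕ) (σ : ℕ → Tm Sig),
    subst σ (lift d t) = subst (fun n => σ (if n < d then n else n + 1)) t := by
  induction t with
  | var n => intro d σ; by_cases h : n < d <;> simp [lift, subst, h]
  | app t u iht ihu => intro d σ; simp [lift, subst, iht d, ihu d]
  | lam t ih =>
    intro d σ
    simp only [lift, subst, ih (d + 1)]
    congr 2
    funext n
    cases n with
    | zero => simp [up]
    | succ n => by_cases h : n < d <;> simp [up, h]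
  | sym f => intro d σ; rfl

theorem lift_subst (t : Tm Sig) : ∀ (d : ℕ) (σ : ℕ → Tm Sig),
    lift d (subst σ t) = subst (fun n => lift d (σ n)) t := by
  induction t with
  | var n => intro d σ; rfl
  | app t u iht ihu => intro d σ; simp [lift, subst, iht d, ihu d]
  | lam t ih =>
    intro d σ
    simp only [lift, subst, ih (d + 1)]
    congr 2
    funext n
    cases n with
    | zero => simp [up, lift]
    | succ n => simp [up, lift_lift _ d 0 (Nat.zero_le d)]
  | sym f => intro d σ; rfl

theorem subst_up_lift (σ : ℕ → Tm Sig) (t : Tm Sig) :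
    subst (up σ) (lift 0 t) = lift 0 (subst σ t) := by
  rw [subst_lift, lift_subst]; rfl

theorem subst_subst (t : Tm Sig) : ∀ σ τ : ℕ → Tm Sig,
    subst σ (subst τ t) = subst (fun n => subst σ (τ n)) t := by
  induction t with
  | var n => intro σ τ; rfl
  | app t u iht ihu => intro σ τ; simp [subst, iht, ihu]
  | lam t ih =>
    intro σ τ
    simp only [subst, ih]
    congr 2
    funext n
    cases n with
    | zero => rfl
    | succ n => exact subst_up_lift σ (τ n)
  | sym f => intro σ τ; rfl

theorem up_var : up (var : ℕ → Tm Sig) = var := by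
  funext n
  cases n <;> simp [up, lift]

theorem subst_var (t : Tm Sig) : subst var t = t := by
  induction t with
  | var n => rfl
  | app t u iht ihu => simp [subst, iht, ihu]
  | lam t ih => simp [subst, up_var, ih]
  | sym f => rfl

theorem subst_congr (t : Tm Sig) : ∀ σ τ : ℕ → Tm Sig, (∀ n, FVar t n → σ n = τ n) →
    subst σ t = subst τ t := by
  induction t with
  | var n => intro σ τ h; exact h n rfl
  | app t u iht ihu =>
    intro σ τ h
    simp only [subst]
    rw [iht σ τ fun n hn => h n (Or.inl hn), ihu σ τ fun n hn => h n (Or.inr hn)]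
  | lam t ih =>
    intro σ τ h
    simp only [subst]
    rw [ih (up σ) (up τ)]
    intro n hn
    cases n with
    | zero => rfl
    | succ n => exact congrArg (lift 0) (h n hn)
  | sym f => intro σ τ h; rfl

theorem subst_subst1 (σ : ℕ → Tm Sig) (u t : Tm Sig) :
    subst σ (subst1 u t) = subst1 (subst σ u) (subst (up σ) t) := by
  unfold subst1
  rw [subst_subst, subst_subst]
  congr 1
  funext n
  cases n with
  | zero => rfl
  | succ n =>
    have h : subst (scons (subst σ u) var) (lift 0 (σ n)) = subst var (σ n) :=
      subst_lift _ _ _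
    exact (h.trans (subst_var _)).symm

theorem lift_subst1 (d : ℕ) (u t : Tm Sig) :
    lift d (subst1 u t) = subst1 (lift d u) (lift (d + 1) t) := by
  unfold subst1
  rw [lift_subst, subst_lift]
  congr 1
  funext n
  cases n with
  | zero => simp [scons]
  | succ n => by_cases h : n < d <;> simp [scons, lift, h]

theorem countVar_pos (t : Tm Sig) : ∀ n, FVar t n → 0 < countVar t n := by
  induction t with
  | var m => intro n h; simp [countVar, show m = n from h]
  | app t u iht ihu =>
    intro n h
    simp only [countVar]
    rcases h with h | h
    · have := iht n h; omega
    · have := ihu n h; omega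
  | lam t ih => intro n h; exact ih (n + 1) h
  | sym f => intro n h; exact h.elim

theorem subst_closed {t : Tm Sig} (h : ClosedTm t) (σ : ℕ → Tm Sig) : subst σ t = t := by
  rw [subst_congr t σ var fun n hn => (h n hn).elim, subst_var]

/-! ### Applicative terms and patterns -/

theorem Applicative.subst {t : Tm Sig} (h : Applicative t) (σ : ℕ → Tm Sig)
    (hσ : ∀ n, FVar t n → Applicative (σ n)) : Applicative (subst σ t) := by
  induction h with
  | var n => exact hσ n rfl
  | sym f => exact .sym f
  | app _ _ iht ihu =>
    exact .app (iht fun n hn => hσ n (Or.inl hn)) (ihu fun n hn => hσ n (Or.inr hn))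

theorem applicative_of_subst (σ : ℕ → Tm Sig) (t : Tm Sig) (h : Applicative (Tm.subst σ t)) :
    ∀ n, FVar t n → Applicative (σ n) := by
  induction t with
  | var m => intro n hn; cases hn; exact h
  | app t u iht ihu =>
    intro n hn
    cases h with
    | app h₁ h₂ =>
      rcases hn with hn | hn
      · exact iht h₁ n hn
      · exact ihu h₂ n hn
  | lam t ih => cases h
  | sym f => intro n hn; exact hn.elim

/-- First-order patterns: `Pat false` is the grammar `t ::= x | f t₁ … tₙ` presented by binary
application, and `Pat true` restricts it to the terms whose head is a function symbol. -/
inductive Pat : Bool → Tm Sig → Prop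
  | var (n : ℕ) : Pat false (var n)
  | sym (b : Bool) (f : Sig) : Pat b (sym f)
  | app (b : Bool) {t u : Tm Sig} : Pat true t → Pat false u → Pat b (app t u)

theorem Pat.weaken {t : Tm Sig} (h : Pat true t) : Pat false t := by
  cases h with
  | sym _ f => exact .sym _ f
  | app _ h₁ h₂ => exact .app _ h₁ h₂

theorem Pat.appList (ts : List (Tm Sig)) : ∀ h : Tm Sig, Pat true h →
    (∀ t ∈ ts, Pat false t) → Pat true (appList h ts) := by
  induction ts with
  | nil => intro h hh _; exact hh
  | cons t ts ih =>
    intro h hh hts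
    exact ih _ (.app _ hh (hts t (by simp))) fun s hs => hts s (by simp [hs])

theorem Algebraic.pat {t : Tm Sig} (h : Algebraic t) : Pat false t := by
  induction h with
  | var n => exact .var n
  | symApp f ts _ ih => exact (Pat.appList ts _ (.sym _ f) ih).weaken

theorem Algebraic.pat_true {t : Tm Sig} (h : Algebraic t) (hv : ∀ n, t ≠ Tm.var n) :
    Pat true t := by
  cases h with
  | var n => exact (hv n rfl).elim
  | symApp f ts h => exact Pat.appList ts _ (.sym _ f) fun t ht => (h t ht).pat

/-- An instance of a pattern headed by a function symbol is never an abstraction. -/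
theorem Pat.subst_ne_lam {t : Tm Sig} (h : Pat true t) (σ : ℕ → Tm Sig) (s : Tm Sig) :
    Tm.subst σ t ≠ lam s := by
  cases h <;> simp [Tm.subst]

end Tm

/-! ### Parallel β-reduction without the substitution clause -/

/-- Parallel β-reduction generated without closure under substitution; it coincides with `PBeta`
and has the expected inversion principles. -/
inductive PB {Sig : Type} : Tm Sig → Tm Sig → Prop
  | var (n : ℕ) : PB (Tm.var n) (Tm.var n)
  | sym (f : Sig) : PB (Tm.sym f) (Tm.sym f)
  | app {t₁ u₁ t₂ u₂ : Tm Sig} : PB t₁ u₁ → PB t₂ u₂ → PB (Tm.app t₁ t₂) (Tm.app u₁ u₂)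
  | abs {t u : Tm Sig} : PB t u → PB (Tm.lam t) (Tm.lam u)
  | beta {t₁ u₁ t₂ u₂ : Tm Sig} : PB t₁ u₁ → PB t₂ u₂ →
      PB (Tm.app (Tm.lam t₁) t₂) (Tm.subst1 u₂ u₁)

namespace PB

variable {Sig : Type}

theorem refl (t : Tm Sig) : PB t t := by
  induction t with
  | var n => exact .var n
  | app t u iht ihu => exact .app iht ihu
  | lam t ih => exact .abs ih
  | sym f => exact .sym f

theorem lift {t u : Tm Sig} (h : PB t u) : ∀ d, PB (Tm.lift d t) (Tm.lift d u) := by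
  induction h with
  | var n => intro d; exact refl _
  | sym f => intro d; exact refl _
  | app _ _ ih₁ ih₂ => intro d; exact .app (ih₁ d) (ih₂ d)
  | abs _ ih => intro d; exact .abs (ih (d + 1))
  | beta _ _ ih₁ ih₂ =>
    intro d
    rw [Tm.lift_subst1]
    exact .beta (ih₁ (d + 1)) (ih₂ d)

theorem up {σ τ : ℕ → Tm Sig} (h : ∀ n, PB (σ n) (τ n)) (n : ℕ) :
    PB (Tm.up σ n) (Tm.up τ n) := by
  cases n with
  | zero => exact .var 0
  | succ n => exact (h n).lift 0

theorem subst {t u : Tm Sig} (h : PB t u) : ∀ {σ τ : ℕ → Tm Sig}, (∀ n, PB (σ n) (τ n)) →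
    PB (Tm.subst σ t) (Tm.subst τ u) := by
  induction h with
  | var n => intro σ τ hs; exact hs n
  | sym f => intro σ τ _; exact .sym f
  | app _ _ ih₁ ih₂ => intro σ τ hs; exact .app (ih₁ hs) (ih₂ hs)
  | abs _ ih => intro σ τ hs; exact .abs (ih (up hs))
  | beta _ _ ih₁ ih₂ =>
    intro σ τ hs
    rw [Tm.subst_subst1]
    exact .beta (ih₁ (up hs)) (ih₂ hs)

theorem subst1 {t t' u u' : Tm Sig} (ht : PB t t') (hu : PB u u') :
    PB (Tm.subst1 u t) (Tm.subst1 u' t') := by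
  refine ht.subst fun n => ?_
  cases n with
  | zero => exact hu
  | succ n => exact .var n

theorem iff_pBeta {t u : Tm Sig} : PB t u ↔ PBeta t u := by
  constructor
  · intro h
    induction h with
    | var n => exact .var n
    | sym f => exact .sym f
    | app _ _ ih₁ ih₂ => exact .app ih₁ ih₂
    | abs _ ih => exact .abs ih
    | beta _ _ ih₁ ih₂ => exact .beta ih₁ ih₂
  · intro h
    induction h with
    | var n => exact .var n
    | sym f => exact .sym f
    | app _ _ ih₁ ih₂ => exact .app ih₁ ih₂
    | abs _ ih => exact .abs ih
    | substC σ _ ih => exact ih.subst fun n => refl _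
    | beta _ _ ih₁ ih₂ => exact .beta ih₁ ih₂

theorem eq_of_applicative {t u : Tm Sig} (h : PB t u) (ht : Tm.Applicative t) : u = t := by
  induction h with
  | var n => rfl
  | sym f => rfl
  | app _ _ ih₁ ih₂ =>
    cases ht with
    | app h₁ h₂ => rw [ih₁ h₁, ih₂ h₂]
  | abs _ _ => cases ht
  | beta _ _ _ _ =>
    cases ht with
    | app h₁ _ => cases h₁

/-- A parallel β-step from an instance of a linear pattern takes place inside the substitution. -/
theorem of_linear_pat {b : Bool} {l : Tm Sig} (hl : Tm.Pat b l) : ∀ (σ : ℕ → Tm Sig) (u : Tm Sig),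
    Tm.LinearTm l → PB (Tm.subst σ l) u →
    ∃ τ : ℕ → Tm Sig, (∀ n, PB (σ n) (τ n)) ∧ u = Tm.subst τ l := by
  induction hl with
  | var n =>
    intro σ u _ h
    refine ⟨fun m => if m = n then u else σ m, fun m => ?_, by simp [Tm.subst]⟩
    by_cases hm : m = n
    · subst hm; simpa [Tm.subst] using h
    · simpa [hm] using refl (σ m)
  | sym b f =>
    intro σ u _ h
    cases h
    exact ⟨σ, fun n => refl _, rfl⟩
  | @app b t s ht hs iht ihs =>
    intro σ u hlin h
    have hlt : Tm.LinearTm t := fun n => by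
      have := hlin n
      simp only [Tm.countVar] at this
      omega
    have hls : Tm.LinearTm s := fun n => by
      have := hlin n
      simp only [Tm.countVar] at this
      omega
    -- the head of the instance is a function symbol, so the step is not a β-contraction here
    obtain ⟨u₁, u₂, rfl, h₁, h₂⟩ :
        ∃ u₁ u₂, u = Tm.app u₁ u₂ ∧ PB (Tm.subst σ t) u₁ ∧ PB (Tm.subst σ s) u₂ := by
      generalize hx : Tm.subst σ t = x at h
      generalize hy : Tm.subst σ s = y at h
      simp only [Tm.subst, hx, hy] at h
      cases h with
      | app h₁ h₂ => exact ⟨_, _, rfl, h₁, h₂⟩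
      | beta _ _ => exact (ht.subst_ne_lam σ _ hx).elim
    obtain ⟨τ₁, hτ₁, rfl⟩ := iht σ u₁ hlt h₁
    obtain ⟨τ₂, hτ₂, rfl⟩ := ihs σ u₂ hls h₂
    classical
    refine ⟨fun n => if Tm.FVar t n then τ₁ n else τ₂ n, fun n => ?_, ?_⟩
    · by_cases hn : Tm.FVar t n
      · simpa [hn] using hτ₁ n
      · simpa [hn] using hτ₂ n
    · simp only [Tm.subst]
      congr 1
      · exact Tm.subst_congr _ _ _ fun n hn => by simp [hn]
      · refine Tm.subst_congr _ _ _ fun n hn => ?_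
        have hnt : ¬ Tm.FVar t n := fun hnt => by
          have h₁ := Tm.countVar_pos _ _ hnt
          have h₂ := Tm.countVar_pos _ _ hn
          have h₃ := hlin n
          simp only [Tm.countVar] at h₃
          omega
        simp [hnt]

end PB

/-! ### Conditional rewriting without the substitution clause -/

/-- One stratum of conditional rewriting generated without closure under substitution; it coincides with
`CondStep Rules prev` whenever `prev` is closed under substitution. -/
inductive CS {Sig : Type} (Rules : Set (CondRule Sig))
    (prev : Tm Sig → Tm Sig → Prop) : Tm Sig → Tm Sig → Prop
  | rule {ρ : CondRule Sig} (hρ : ρ ∈ Rules) (σ : ℕ → Tm Sig)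
      (hconds : ∀ p ∈ ρ.conds, Joinable prev (Tm.subst σ p.1) (Tm.subst σ p.2)) :
      CS Rules prev (Tm.subst σ ρ.lhs) (Tm.subst σ ρ.rhs)
  | abs {t u : Tm Sig} : CS Rules prev t u → CS Rules prev (Tm.lam t) (Tm.lam u)
  | appL {t u v : Tm Sig} : CS Rules prev t u → CS Rules prev (Tm.app t v) (Tm.app u v)
  | appR {t u v : Tm Sig} : CS Rules prev t u → CS Rules prev (Tm.app v t) (Tm.app v u)

section Rewriting

open Relation

variable {Sig : Type} {Rules : Set (CondRule Sig)} {prev : Tm Sig → Tm Sig → Prop}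

theorem CS.subst (hprev : ∀ (σ : ℕ → Tm Sig) t u, prev t u → prev (Tm.subst σ t) (Tm.subst σ u))
    {t u : Tm Sig} (h : CS Rules prev t u) :
    ∀ σ : ℕ → Tm Sig, CS Rules prev (Tm.subst σ t) (Tm.subst σ u) := by
  induction h with
  | rule hρ τ hc =>
    intro σ
    rw [Tm.subst_subst, Tm.subst_subst]
    refine .rule hρ _ fun p hp => ?_
    obtain ⟨w, h₁, h₂⟩ := hc p hp
    rw [← Tm.subst_subst, ← Tm.subst_subst]
    exact ⟨Tm.subst σ w, h₁.lift _ (hprev σ), h₂.lift _ (hprev σ)⟩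
  | abs _ ih => intro σ; exact .abs (ih _)
  | appL _ ih => intro σ; exact .appL (ih _)
  | appR _ ih => intro σ; exact .appR (ih _)

theorem CS.of_condStep
    (hprev : ∀ (σ : ℕ → Tm Sig) t u, prev t u → prev (Tm.subst σ t) (Tm.subst σ u))
    {t u : Tm Sig} (h : CondStep Rules prev t u) : CS Rules prev t u := by
  induction h with
  | rule hρ τ hc => exact .rule hρ τ hc
  | abs _ ih => exact .abs ih
  | appL _ ih => exact .appL ih
  | appR _ ih => exact .appR ih
  | substC σ _ ih => exact ih.subst hprev σ

theorem CS.condStep {t u : Tm Sig} (h : CS Rules prev t u) : CondStep Rules prev t u := by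
  induction h with
  | rule hρ τ hc => exact .rule hρ τ hc
  | abs _ ih => exact .abs ih
  | appL _ ih => exact .appL ih
  | appR _ ih => exact .appR ih

theorem CondRel.subst (i : ℕ) (σ : ℕ → Tm Sig) (t u : Tm Sig) (h : CondRel Rules i t u) :
    CondRel Rules i (Tm.subst σ t) (Tm.subst σ u) := by
  cases i with
  | zero => exact h.elim
  | succ i => exact CondStep.substC σ h

/-- Right-applicativity keeps the reducts of applicative terms applicative. -/
theorem CS.applicative (hra : RightApplicative Rules) {t u : Tm Sig} (h : CS Rules prev t u)
    (ht : Tm.Applicative t) : Tm.Applicative u := by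
  induction h with
  | @rule ρ hρ σ _ =>
    exact (hra ρ hρ).subst σ fun n hn => Tm.applicative_of_subst σ _ ht n (ρ.fv_rhs n hn)
  | abs _ _ => cases ht
  | appL _ ih =>
    cases ht with
    | app h₁ h₂ => exact .app (ih h₁) h₂
  | appR _ ih =>
    cases ht with
    | app h₁ h₂ => exact .app h₁ (ih h₂)

theorem CondRel.applicative_star (hra : RightApplicative Rules) (i : ℕ) {t u : Tm Sig}
    (h : ReflTransGen (CondRel Rules i) t u) (ht : Tm.Applicative t) : Tm.Applicative u := by
  induction h with
  | refl => exact ht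
  | tail _ hs ih =>
    cases i with
    | zero => exact hs.elim
    | succ i => exact (CS.of_condStep (CondRel.subst i) hs).applicative hra ih

theorem PB.star_eq_of_applicative {t u : Tm Sig} (h : ReflTransGen PB t u)
    (ht : Tm.Applicative t) : u = t := by
  induction h with
  | refl => rfl
  | tail _ hs ih => subst ih; exact hs.eq_of_applicative ht

theorem CondStep.star_app {t t' u u' : Tm Sig} (ht : ReflTransGen (CondStep Rules prev) t t')
    (hu : ReflTransGen (CondStep Rules prev) u u') :
    ReflTransGen (CondStep Rules prev) (Tm.app t u) (Tm.app t' u') :=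
  (ht.lift (fun x => Tm.app x u) fun _ _ h => CondStep.appL h).trans
    (hu.lift (fun x => Tm.app t' x) fun _ _ h => CondStep.appR h)

theorem CondStep.star_lam {t t' : Tm Sig} (ht : ReflTransGen (CondStep Rules prev) t t') :
    ReflTransGen (CondStep Rules prev) (Tm.lam t) (Tm.lam t') :=
  ht.lift Tm.lam fun _ _ h => CondStep.abs h

theorem CondStep.star_subst (σ : ℕ → Tm Sig) {t t' : Tm Sig}
    (ht : ReflTransGen (CondStep Rules prev) t t') :
    ReflTransGen (CondStep Rules prev) (Tm.subst σ t) (Tm.subst σ t') :=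
  ht.lift (Tm.subst σ) fun _ _ h => CondStep.substC σ h

theorem CondStep.star_subst_pointwise (t : Tm Sig) : ∀ {σ τ : ℕ → Tm Sig},
    (∀ n, ReflTransGen (CondStep Rules prev) (σ n) (τ n)) →
    ReflTransGen (CondStep Rules prev) (Tm.subst σ t) (Tm.subst τ t) := by
  induction t with
  | var n => intro σ τ h; exact h n
  | app t u iht ihu => intro σ τ h; exact star_app (iht h) (ihu h)
  | lam t ih =>
    intro σ τ h
    refine star_lam (ih fun n => ?_)
    cases n with
    | zero => exact .refl
    | succ n =>
      simp only [Tm.up, Tm.lift_eq_subst _ 0]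
      exact star_subst _ (h n)
  | sym f => intro σ τ _; exact .refl

theorem CondStep.star_subst1 {t t' u u' : Tm Sig} (ht : ReflTransGen (CondStep Rules prev) t t')
    (hu : ReflTransGen (CondStep Rules prev) u u') :
    ReflTransGen (CondStep Rules prev) (Tm.subst1 u t) (Tm.subst1 u' t') := by
  refine (star_subst _ ht).trans (star_subst_pointwise t' fun n => ?_)
  cases n with
  | zero => exact hu
  | succ n => exact .refl

/-- Left-hand sides are headed by a function symbol, so a step from an abstraction happens
under the binder. -/
theorem CS.lam_inv {t v : Tm Sig} (h : CS Rules prev (Tm.lam t) v) :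
    ∃ t', v = Tm.lam t' ∧ CS Rules prev t t' := by
  generalize hx : Tm.lam t = x at h
  cases h with
  | @rule ρ hρ σ hc => exact ((ρ.lhs_alg.pat_true ρ.lhs_not_var).subst_ne_lam σ t hx.symm).elim
  | abs h => cases hx; exact ⟨_, rfl, h⟩
  | appL h => cases hx
  | appR h => cases hx

theorem CondStep.star_lam_inv
    (hprev : ∀ (σ : ℕ → Tm Sig) t u, prev t u → prev (Tm.subst σ t) (Tm.subst σ u))
    {t v : Tm Sig} (h : ReflTransGen (CondStep Rules prev) (Tm.lam t) v) :
    ∃ t', v = Tm.lam t' ∧ ReflTransGen (CondStep Rules prev) t t' := by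
  induction h with
  | refl => exact ⟨t, rfl, .refl⟩
  | tail _ hs ih =>
    obtain ⟨s, rfl, h₁⟩ := ih
    obtain ⟨s', rfl, h₂⟩ := (CS.of_condStep hprev hs).lam_inv
    exact ⟨s', rfl, h₁.tail h₂.condStep⟩

/-! ### Commutation -/

/-- The conditions of a rule stay satisfied when the substitution is reduced by parallel
β-reduction, given commutation at the level that evaluates the conditions. -/
theorem conds_of_pb (hsc : SemiClosed Rules) (hra : RightApplicative Rules) (i : ℕ)
    (hcomm : Commutes PB (CondRel Rules i)) {ρ : CondRule Sig} (hρ : ρ ∈ Rules)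
    {σ τ : ℕ → Tm Sig} (hστ : ∀ n, PB (σ n) (τ n)) {p : Tm Sig × Tm Sig} (hp : p ∈ ρ.conds)
    (h : Joinable (CondRel Rules i) (Tm.subst σ p.1) (Tm.subst σ p.2)) :
    Joinable (CondRel Rules i) (Tm.subst τ p.1) (Tm.subst τ p.2) := by
  obtain ⟨happ, hcl⟩ := hsc ρ hρ p hp
  obtain ⟨s, h₁, h₂⟩ := h
  rw [Tm.subst_closed hcl] at h₂ ⊢
  obtain ⟨w, hw₁, hw₂⟩ := hcomm _ _ _ (.single ((PB.refl p.1).subst hστ)) h₁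
  -- `s` is a reduct of the applicative term `p.2`, hence applicative, hence β-normal
  obtain rfl := PB.star_eq_of_applicative hw₂ (CondRel.applicative_star hra i h₂ happ)
  exact ⟨w, hw₁, h₂⟩

/-- One rewrite step against one parallel β-step: a single parallel β-step suffices to close the
diagram on the other side, because it reduces at once all the copies made by the rewrite step. -/
theorem CS.pb_diagram (hsc : SemiClosed Rules) (hll : LeftLinear Rules)
    (hra : RightApplicative Rules) (i : ℕ) (hcomm : Commutes PB (CondRel Rules i))
    {t v : Tm Sig} (h : CS Rules (CondRel Rules i) t v) : ∀ u, PB t u →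
    ∃ w, ReflTransGen (CondStep Rules (CondRel Rules i)) u w ∧ PB v w := by
  induction h with
  | @rule ρ hρ σ hc =>
    intro u hu
    obtain ⟨τ, hτ, rfl⟩ :=
      PB.of_linear_pat (ρ.lhs_alg.pat_true ρ.lhs_not_var) σ u (hll ρ hρ) hu
    exact ⟨Tm.subst τ ρ.rhs,
      .single (.rule hρ τ fun p hp => conds_of_pb hsc hra i hcomm hρ hτ hp (hc p hp)),
      (PB.refl ρ.rhs).subst hτ⟩
  | abs _ ih =>
    intro u hu
    cases hu with
    | abs hu =>
      obtain ⟨w, h₁, h₂⟩ := ih _ hu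
      exact ⟨Tm.lam w, CondStep.star_lam h₁, .abs h₂⟩
  | appL hs ih =>
    intro u hu
    cases hu with
    | app hu₁ hu₂ =>
      obtain ⟨w, h₁, h₂⟩ := ih _ hu₁
      exact ⟨_, CondStep.star_app h₁ .refl, .app h₂ hu₂⟩
    | beta hu₁ hu₂ =>
      obtain ⟨w, h₁, h₂⟩ := ih _ (.abs hu₁)
      obtain ⟨s, rfl, _⟩ := hs.lam_inv
      obtain ⟨w', rfl, h₃⟩ := CondStep.star_lam_inv (CondRel.subst i) h₁
      cases h₂ with
      | abs h₂ => exact ⟨_, CondStep.star_subst1 h₃ .refl, .beta h₂ hu₂⟩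
  | appR _ ih =>
    intro u hu
    cases hu with
    | app hu₁ hu₂ =>
      obtain ⟨w, h₁, h₂⟩ := ih _ hu₂
      exact ⟨_, CondStep.star_app .refl h₁, .app hu₁ h₂⟩
    | beta hu₁ hu₂ =>
      obtain ⟨w, h₁, h₂⟩ := ih _ hu₂
      exact ⟨_, CondStep.star_subst1 .refl h₁, .beta hu₁ h₂⟩

end Rewriting

theorem commutes_of_diagram {α : Type} {P R : α → α → Prop}
    (h : ∀ t u v, P t u → R t v → ∃ w, Relation.ReflTransGen R u w ∧ P v w) : Commutes P R := by
  have strip : ∀ t v, Relation.ReflTransGen R t v → ∀ u, P t u →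
      ∃ w, Relation.ReflTransGen R u w ∧ P v w := by
    intro t v hR
    induction hR with
    | refl => exact fun u hu => ⟨u, .refl, hu⟩
    | tail _ hs ih =>
      intro u hu
      obtain ⟨w, h₁, h₂⟩ := ih u hu
      obtain ⟨w', h₃, h₄⟩ := h _ _ _ h₂ hs
      exact ⟨w', h₁.trans h₃, h₄⟩
  intro s u t hP hR
  induction hP with
  | refl => exact ⟨t, hR, .refl⟩
  | tail _ hs ih =>
    obtain ⟨w, h₁, h₂⟩ := ih
    obtain ⟨w', h₃, h₄⟩ := strip _ _ h₁ _ hs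
    exact ⟨w', h₃, h₂.tail h₄⟩

theorem PB.commutes_condRel {Sig : Type} {Rules : Set (CondRule Sig)}
    (hsc : SemiClosed Rules) (hll : LeftLinear Rules) (hra : RightApplicative Rules) (i : ℕ) :
    Commutes PB (CondRel Rules i) := by
  induction i with
  | zero => exact commutes_of_diagram fun _ _ _ _ h => h.elim
  | succ i ih =>
    exact commutes_of_diagram fun _ u _ hP hR =>
      (CS.of_condStep (CondRel.subst i) hR).pb_diagram hsc hll hra i ih u hP

/-- For a semi-closed, left-linear, right-applicative system `R`,
parallel β-reduction `▷β` commutes with `→_{R_i}` for every `i`. -/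
theorem pbeta_commutes_condRel {Sig : Type} (Rules : Set (CondRule Sig))
    (hsc : SemiClosed Rules) (hll : LeftLinear Rules) (hra : RightApplicative Rules)
    (i : ℕ) (t u v : Tm Sig)
    (hβ : Relation.ReflTransGen PBeta t u)
    (hR : Relation.ReflTransGen (CondRel Rules i) t v) :
    ∃ w, Relation.ReflTransGen (CondRel Rules i) u w ∧
      Relation.ReflTransGen PBeta v w := by
  simp only [show (PBeta : Tm Sig → Tm Sig → Prop) = PB from
    funext fun _ => funext fun _ => propext PB.iff_pBeta.symm] at hβ ⊢
  exact PB.commutes_condRel hsc hll hra i t u v hβ hR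
end
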